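/- arXiv:2404.09084 — 3 statements merged into one kernel-verified Lean document; each statement's English description precedes it below -/
import Mathlib

section
/- Let n ≥ 1 and let W = (W₁,…,Wₙ) be the weighted left multi-shift on F²(Hₙ) associated with a weight sequence μ = {μ_β}_{|β|≥1} of strictly positive reals with sup_{α∈𝔽ₙ⁺} μ_{g_iα} < ∞ for each i. Suppose there exists i ∈ {1,…,n} such that μ_{g_iα} − μ_α → 0 as α → ∞ (i.e., for every ε > 0 the set {α ∈ 𝔽ₙ⁺, |α| ≥ 1 : |μ_{g_iα} − μ_α| ≥ ε} is finite). Then every compact operator on F²(Hₙ) belongs to the C*-algebra generated by W₁,…,Wₙ and the identity (the smallest norm-closed, adjoint-closed subalgebra of bounded operators containing W₁,…,Wₙ and I). -/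
open Filter ContinuousLinearMap
open scoped ComplexConjugate

noncomputable section

attribute [local instance] Classical.decEq

abbrev Word (n : ℕ) := FreeMonoid (Fin n)

abbrev Fock (n : ℕ) := lp (fun _ : Word n => ℂ) 2

def fockE {n : ℕ} (α : Word n) : Fock n := lp.single 2 α 1

def wordOp {n : ℕ} {H : Type*} [NormedAddCommGroup H] [InnerProductSpace ℂ H]
    (T : Fin n → H →L[ℂ] H) (α : Word n) : H →L[ℂ] H :=
  ((FreeMonoid.toList α).map T).prod

def wordOfFn {n k : ℕ} (f : Fin k → Fin n) : Word n := FreeMonoid.ofList (List.ofFn f)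

def rowSum {n : ℕ} {H : Type*} [NormedAddCommGroup H] [InnerProductSpace ℂ H]
    [CompleteSpace H] (T : Fin n → H →L[ℂ] H) (k : ℕ) : H →L[ℂ] H :=
  ∑ f : Fin k → Fin n, wordOp T (wordOfFn f) * adjoint (wordOp T (wordOfFn f))

def jsr {n : ℕ} {H : Type*} [NormedAddCommGroup H] [InnerProductSpace ℂ H]
    [CompleteSpace H] (T : Fin n → H →L[ℂ] H) : ℝ :=
  limUnder atTop fun k : ℕ => ‖rowSum T k‖ ^ ((1 : ℝ) / (2 * k))

def muProd {n : ℕ} (μ : Word n → ℝ) (β α : Word n) : ℝ :=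
  ((List.range (FreeMonoid.length β)).map
    fun j => μ (FreeMonoid.ofList ((FreeMonoid.toList β).drop j) * α)).prod

def IsWeightedShift {n : ℕ} (μ : Word n → ℝ) (W : Fin n → Fock n →L[ℂ] Fock n) : Prop :=
  ∀ (i : Fin n) (α : Word n),
    W i (fockE α) = (μ (FreeMonoid.of i * α) : ℂ) • fockE (FreeMonoid.of i * α)

def BddWeights {n : ℕ} (μ : Word n → ℝ) : Prop :=
  ∀ i : Fin n, BddAbove (Set.range fun α : Word n => μ (FreeMonoid.of i * α))

def IsWeightedShiftTensor {n : ℕ} {H : Type*} [NormedAddCommGroup H] [InnerProductSpace ℂ H]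
    (μ : Word n → ℝ)
    (Wt : Fin n → lp (fun _ : Word n => H) 2 →L[ℂ] lp (fun _ : Word n => H) 2) : Prop :=
  ∀ (i : Fin n) (α : Word n) (h : H),
    Wt i (lp.single 2 α h) = (μ (FreeMonoid.of i * α) : ℂ) • lp.single 2 (FreeMonoid.of i * α) h

def polyOp {n : ℕ} {H : Type*} [NormedAddCommGroup H] [InnerProductSpace ℂ H]
    (T : Fin n → H →L[ℂ] H) (c : Word n →₀ ℂ) : H →L[ℂ] H :=
  c.sum fun α z => z • wordOp T α

/-!
The operator `C = ∑ W_j W_j*` is a positive element of the generated C*-algebra `A`, and its kernel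
is spanned by the vacuum vector `e₁`. By von Neumann's mean ergodic theorem the averages of the
powers of the contraction `1 - C / ‖C‖` converge strongly to the projection `P` onto `ker C`;
composing with a compact operator turns this into norm convergence, so `P K ∈ A` for every compact
`K ∈ A`. The hypothesis on the weights says that the diagonal operator `K = W_i* W_i - C` is
compact, and `P K` is a nonzero multiple of the rank-one operator `e₁ ⊗ e₁`. Since `e₁` is cyclic
for `A`, every rank-one operator lies in `A`, and these span a dense subspace of the compact
operators.
-/

open InnerProductSpace (rankOne)
open scoped Topology

section Compact

variable {𝕜 E F G : Type*} [RCLike 𝕜] [NormedAddCommGroup E] [NormedSpace 𝕜 E]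
  [NormedAddCommGroup F] [NormedSpace 𝕜 F] [NormedAddCommGroup G] [NormedSpace 𝕜 G]

lemma tendsto_comp_of_isCompactOperator {ι : Type*} {l : Filter ι} {T : ι → F →L[𝕜] G}
    {T₀ : F →L[𝕜] G} {M : ℝ} (hM : ∀ i, ‖T i‖ ≤ M) (hT : ∀ y, Tendsto (T · y) l (𝓝 (T₀ y)))
    {K : E →L[𝕜] F} (hK : IsCompactOperator K) :
    Tendsto (fun i => T i ∘L K) l (𝓝 (T₀ ∘L K)) := by
  obtain ⟨C, hC, hKC⟩ :=
    IsCompactOperator.image_closedBall_subset_compact (f := K.toLinearMap) hK 1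
  have hequi : Equicontinuous fun i => (T i : F → G) :=
    ((NormedSpace.equicontinuous_TFAE T).out 1 5 : _ ↔ ∃ M, ∀ i, ‖T i‖ ≤ M).2 ⟨M, hM⟩
  have hunif : TendstoUniformlyOn (fun i => (T i : F → G)) T₀ l C :=
    UniformOnFun.tendsto_iff_tendstoUniformlyOn.1
      ((EquicontinuousOn.tendsto_uniformOnFun_iff_pi' (𝔖 := {C}) (by simpa using hC)
        (fun s _ => hequi.equicontinuousOn s) l T₀).2
        (tendsto_pi_nhds.2 fun y => hT y)) C rfl
  refine Metric.tendsto_nhds.2 fun ε hε => ?_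
  filter_upwards [Metric.tendstoUniformlyOn_iff.1 hunif (ε / 2) (half_pos hε)] with i hi
  rw [dist_comm, dist_eq_norm, ← sub_comp]
  refine (opNorm_le_of_unit_norm (𝕜 := 𝕜) (half_pos hε).le fun x hx => ?_).trans_lt
    (half_lt_self hε)
  simpa [dist_eq_norm] using (hi (K x) (hKC ⟨x, by simp [hx], rfl⟩)).le

end Compact

section Hilbert

variable {𝕜 E F ι : Type*} [RCLike 𝕜] [NormedAddCommGroup E] [InnerProductSpace 𝕜 E]
  [NormedAddCommGroup F] [InnerProductSpace 𝕜 F]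

lemma isCompactOperator_rankOne (x : E) (y : F) : IsCompactOperator (rankOne 𝕜 x y) := by
  rw [InnerProductSpace.rankOne_def']
  exact (isCompactOperator_of_locallyCompactSpace_rng (toSpanSingleton 𝕜 x)).comp_clm (innerSL 𝕜 y)

lemma mem_of_isCompactOperator_of_rankOne_mem [CompleteSpace E] [CompleteSpace F]
    {A : Submodule 𝕜 (F →L[𝕜] E)} (hA : IsClosed (A : Set (F →L[𝕜] E)))
    (h : ∀ x y, rankOne 𝕜 x y ∈ A) {K : F →L[𝕜] E} (hK : IsCompactOperator K) : K ∈ A := by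
  obtain ⟨w, b, -⟩ := exists_hilbertBasis 𝕜 E
  let U (J : Finset w) : Submodule 𝕜 E := .span 𝕜 (J.image b)
  have hU : Monotone U := fun I J hIJ =>
    Submodule.span_mono (Finset.coe_subset.2 (Finset.image_subset_image hIJ))
  have hUK (J : Finset w) : (U J).starProjection ∘L K ∈ A := by
    rw [(stdOrthonormalBasis 𝕜 (U J)).starProjection_eq_sum_rankOne, finsetSum_comp]
    refine A.sum_mem fun i _ => ?_
    rw [InnerProductSpace.rankOne_comp]
    exact h _ _
  have hlim : Tendsto (fun J => (U J).starProjection ∘L K) atTop (𝓝 K) :=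
    tendsto_comp_of_isCompactOperator (T₀ := .id 𝕜 E) (fun J => (U J).starProjection_norm_le)
      (fun x => Submodule.starProjection_tendsto_self U hU x b.finite_spans_dense.ge) hK
  exact hA.mem_of_tendsto hlim (.of_forall hUK)

lemma norm_le_of_apply_hilbertBasis (b : HilbertBasis ι 𝕜 E) {T : E →L[𝕜] E} {t : ι → 𝕜}
    (hT : ∀ i, T (b i) = t i • b i) {C : ℝ} (hC : 0 ≤ C) (ht : ∀ i, ‖t i‖ ≤ C) : ‖T‖ ≤ C := by
  have hrepr (x : E) (i : ι) : b.repr (T x) i = t i * b.repr x i := by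
    have hcoord : innerSL 𝕜 (b i) ∘L T = t i • innerSL 𝕜 (b i) :=
      ext_on (Submodule.dense_iff_topologicalClosure_eq_top.2 b.dense_span) <|
        Set.forall_mem_range.2 fun j => by
          simp only [comp_apply, hT, map_smul, smul_apply, innerSL_apply_apply, smul_eq_mul,
            orthonormal_iff_ite.1 b.orthonormal]
          split_ifs with hij <;> simp [hij]
    simpa only [b.repr_apply_apply, comp_apply, smul_apply, innerSL_apply_apply, smul_eq_mul]
      using DFunLike.congr_fun hcoord x
  refine opNorm_le_bound _ hC fun x => ?_
  calc ‖T x‖ = ‖b.repr (T x)‖ := (b.repr.norm_map _).symm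
    _ ≤ ‖(C : 𝕜) • b.repr x‖ := lp.norm_mono (by norm_num) fun i => by
      rw [hrepr, lp.coeFn_smul, Pi.smul_apply, smul_eq_mul, norm_mul, norm_mul,
        RCLike.norm_of_nonneg hC]
      exact mul_le_mul_of_nonneg_right (ht i) (norm_nonneg _)
    _ = C * ‖x‖ := by rw [norm_smul, RCLike.norm_of_nonneg hC, b.repr.norm_map]

lemma isCompactOperator_of_apply_hilbertBasis [CompleteSpace E] (b : HilbertBasis ι 𝕜 E)
    {T : E →L[𝕜] E} {t : ι → 𝕜} (hT : ∀ i, T (b i) = t i • b i)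
    (ht : Tendsto t cofinite (𝓝 0)) : IsCompactOperator T := by
  let S (J : Finset ι) : E →L[𝕜] E := ∑ i ∈ J, t i • rankOne 𝕜 (b i) (b i)
  have hS (J : Finset ι) : IsCompactOperator (S J) :=
    (compactOperator (RingHom.id 𝕜) E E).sum_mem fun i _ =>
      (isCompactOperator_rankOne (b i) (b i)).smul (t i)
  have hSb (J : Finset ι) (i : ι) : (T - S J) (b i) = (if i ∈ J then 0 else t i) • b i := by
    have hterm (j : ι) : (t j • rankOne 𝕜 (b j) (b j)) (b i) = if i = j then t i • b i else 0 := by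
      rw [smul_apply, InnerProductSpace.rankOne_apply, orthonormal_iff_ite.1 b.orthonormal]
      split_ifs <;> simp_all
    rw [sub_apply, hT, sum_apply, Finset.sum_congr rfl fun j _ => hterm j, Finset.sum_ite_eq]
    split_ifs <;> simp
  have hlim : Tendsto S atTop (𝓝 T) := by
    refine Metric.tendsto_atTop.2 fun ε hε => ?_
    have hfin : {i | ¬ ‖t i‖ < ε / 2}.Finite := by
      simpa using (Metric.tendsto_nhds.1 ht) (ε / 2) (half_pos hε)
    refine ⟨hfin.toFinset, fun J hJ => ?_⟩
    rw [dist_comm, dist_eq_norm]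
    refine (norm_le_of_apply_hilbertBasis b (hSb J) (half_pos hε).le fun i => ?_).trans_lt
      (half_lt_self hε)
    split_ifs with hi
    · simpa using (half_pos hε).le
    · by_contra! hlt
      exact hi (hJ (hfin.mem_toFinset.2 hlt.le.not_gt))
  exact isCompactOperator_of_tendsto hlim (.of_forall hS)

lemma norm_average_pow_le {f : E →L[𝕜] E} (hf : ‖f‖ ≤ 1) (N : ℕ) :
    ‖(N : 𝕜)⁻¹ • ∑ k ∈ Finset.range N, f ^ k‖ ≤ 1 := by
  have hpow (k : ℕ) : ‖f ^ k‖ ≤ 1 := by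
    induction k with
    | zero => exact norm_id_le
    | succ k ih =>
      exact pow_succ f k ▸ (norm_mul_le _ _).trans (mul_le_one₀ ih (norm_nonneg f) hf)
  calc _ ≤ (N : ℝ)⁻¹ * ∑ k ∈ Finset.range N, ‖f ^ k‖ := by
        rw [norm_smul, norm_inv, RCLike.norm_natCast]
        gcongr
        exact norm_sum_le _ _
    _ ≤ (N : ℝ)⁻¹ * N := by
        gcongr
        simpa using Finset.sum_le_card_nsmul (Finset.range N) _ 1 fun k _ => hpow k
    _ ≤ 1 := inv_mul_le_one

variable [CompleteSpace E]

lemma rankOne_mem_of_dense {A : StarSubalgebra 𝕜 (E →L[𝕜] E)}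
    (hA : IsClosed (A : Set (E →L[𝕜] E))) {e : E} (he : ‖e‖ = 1) (hmem : rankOne 𝕜 e e ∈ A)
    (hdense : Dense ((fun T : E →L[𝕜] E => T e) '' A)) (x y : E) : rankOne 𝕜 x y ∈ A := by
  have hleft (z : E) : rankOne 𝕜 z e ∈ A := by
    have hcont : Continuous fun z : E => rankOne 𝕜 z e := by fun_prop
    refine closure_minimal (t := {z | rankOne 𝕜 z e ∈ A}) ?_ (hA.preimage hcont) (hdense z)
    rintro _ ⟨T, hT, rfl⟩
    rw [Set.mem_ofPred_eq, ← InnerProductSpace.comp_rankOne]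
    exact mul_mem hT hmem
  have hmul : rankOne 𝕜 x e * star (rankOne 𝕜 y e) = rankOne 𝕜 x y := by
    rw [star_eq_adjoint, InnerProductSpace.adjoint_rankOne, mul_def,
      InnerProductSpace.rankOne_comp_rankOne, inner_self_eq_norm_sq_to_K, he]
    simp
  exact hmul ▸ mul_mem (hleft x) (star_mem (hleft y))

lemma ker_sum_comp_adjoint [CompleteSpace F] (s : Finset ι) (T : ι → F →L[𝕜] E) :
    (∑ i ∈ s, T i ∘L adjoint (T i)).ker = ⨅ i ∈ s, (adjoint (T i)).ker := by
  ext x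
  simp only [LinearMap.mem_ker, Submodule.mem_iInf, coe_coe]
  refine ⟨fun hx => ?_, fun hx => ?_⟩
  · have hnorm (i : ι) :
        ‖adjoint (T i) x‖ ^ 2 = RCLike.re (inner 𝕜 x ((T i ∘L adjoint (T i)) x)) := by
      simpa only [adjoint_adjoint] using apply_norm_sq_eq_inner_adjoint_right (adjoint (T i)) x
    have hsum : ∑ i ∈ s, ‖adjoint (T i) x‖ ^ 2 = 0 := by
      simp only [hnorm, ← map_sum, ← inner_sum, ← sum_apply, hx, inner_zero_right, map_zero]
    simpa [sq_eq_zero_iff] using (Finset.sum_eq_zero_iff_of_nonneg fun i _ => sq_nonneg _).1 hsum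
  · rw [sum_apply]
    exact Finset.sum_eq_zero fun i hi => by rw [comp_apply, hx i hi, map_zero]

lemma tendsto_average_pow_comp {f : E →L[𝕜] E} (hf : ‖f‖ ≤ 1) {K : F →L[𝕜] E}
    (hK : IsCompactOperator K) :
    Tendsto (fun N : ℕ => ((N : 𝕜)⁻¹ • ∑ k ∈ Finset.range N, f ^ k) ∘L K) atTop
      (𝓝 ((f.eqLocus (1 : E →L[𝕜] E)).starProjection ∘L K)) := by
  refine tendsto_comp_of_isCompactOperator (norm_average_pow_le hf) (fun x => ?_) hK
  rw [Submodule.starProjection_apply]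
  convert f.tendsto_birkhoffAverage_orthogonalProjection hf x using 2 with N
  simp [birkhoffAverage, birkhoffSum, sum_apply]

end Hilbert

section CStarAlgebra

lemma norm_one_sub_inv_norm_smul_le {A : Type*} [CStarAlgebra A] [PartialOrder A]
    [StarOrderedRing A] {a : A} (ha : 0 ≤ a) : ‖1 - ‖a‖⁻¹ • a‖ ≤ 1 := by
  have hnonneg : 0 ≤ ‖a‖⁻¹ • a := smul_nonneg (by positivity) ha
  have hnorm : ‖‖a‖⁻¹ • a‖ ≤ 1 := by
    rw [norm_smul, norm_inv, norm_norm]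
    exact inv_mul_le_one
  have hle : ‖a‖⁻¹ • a ≤ 1 := (CStarAlgebra.norm_le_one_iff_of_nonneg _ hnonneg).1 hnorm
  exact (CStarAlgebra.norm_le_one_iff_of_nonneg _ (sub_nonneg.2 hle)).2 (sub_le_self _ hnonneg)

variable {H : Type*} [NormedAddCommGroup H] [InnerProductSpace ℂ H] [CompleteSpace H]

lemma starProjection_ker_mul_mem {A : StarSubalgebra ℂ (H →L[ℂ] H)}
    (hA : IsClosed (A : Set (H →L[ℂ] H))) {C K : H →L[ℂ] H} (hC : 0 ≤ C) (hCA : C ∈ A)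
    (hK : IsCompactOperator K) (hKA : K ∈ A) : C.ker.starProjection * K ∈ A := by
  let f : H →L[ℂ] H := 1 - ‖C‖⁻¹ • C
  have hfA : f ∈ A := sub_mem (one_mem A) (Complex.coe_smul ‖C‖⁻¹ C ▸ A.smul_mem hCA _)
  have hker : f.eqLocus (1 : H →L[ℂ] H) = C.ker := by
    ext x
    -- This includes the case `C = 0`, where `‖C‖⁻¹ = 0`.
    have hzero : ‖C‖⁻¹ • C x = 0 ↔ C x = 0 := by
      rw [smul_eq_zero, inv_eq_zero, norm_eq_zero]
      exact ⟨fun h => h.elim (fun hC₀ => by rw [hC₀, zero_apply]) id, .inr⟩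
    simpa [f, LinearMap.mem_eqLocus] using hzero
  have hf : ‖f‖ ≤ 1 := norm_one_sub_inv_norm_smul_le hC
  have hlim := tendsto_average_pow_comp hf hK
  simp only [hker] at hlim
  exact hA.mem_of_tendsto hlim (.of_forall fun N =>
    mul_mem (A.smul_mem (sum_mem fun k _ => pow_mem hfA k) _) hKA)

lemma rankOne_mem_of_ker_eq_span_singleton {A : StarSubalgebra ℂ (H →L[ℂ] H)}
    (hA : IsClosed (A : Set (H →L[ℂ] H))) {C K : H →L[ℂ] H} (hC : 0 ≤ C) (hCA : C ∈ A)
    (hK : IsCompactOperator K) (hKA : K ∈ A) {e : H} (he : ‖e‖ = 1) (hker : C.ker = ℂ ∙ e)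
    {c : ℂ} (hc : c ≠ 0) (hKe : adjoint K e = c • e) : rankOne ℂ e e ∈ A := by
  have hproj : C.ker.starProjection = rankOne ℂ e e := by
    ext x
    simp only [hker, Submodule.starProjection_unit_singleton ℂ he, InnerProductSpace.rankOne_apply]
  have hprojK : C.ker.starProjection * K = conj c • rankOne ℂ e e := by
    rw [hproj, mul_def, InnerProductSpace.rankOne_comp, hKe, map_smulₛₗ]
  have hmem : conj c • rankOne ℂ e e ∈ A :=
    hprojK ▸ starProjection_ker_mul_mem hA hC hCA hK hKA
  have hc' : conj c ≠ 0 := (map_ne_zero _).2 hc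
  simpa only [inv_smul_smul₀ hc'] using A.smul_mem hmem (conj c)⁻¹

end CStarAlgebra

section Limits

variable {ι : Type*}

lemma tendsto_cofinite_zero_of_finite {E : Type*} [SeminormedAddGroup E] {p : ι → Prop}
    (hp : {a | ¬ p a}.Finite) {f : ι → E} (hf : ∀ ε, 0 < ε → {a | p a ∧ ε ≤ ‖f a‖}.Finite) :
    Tendsto f cofinite (𝓝 0) := by
  refine Metric.tendsto_nhds.2 fun ε hε => (hp.union (hf ε hε)).subset fun a ha => ?_
  have hle : ε ≤ ‖f a‖ := by simpa using ha
  exact or_iff_not_imp_left.2 fun hpa => ⟨not_not.1 hpa, hle⟩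

lemma tendsto_sq_sub_sq {R : Type*} [SeminormedCommRing R] {l : Filter ι} {u v : ι → R} {M : ℝ}
    (hu : ∀ a, ‖u a‖ ≤ M) (h : Tendsto (fun a => u a - v a) l (𝓝 0)) :
    Tendsto (fun a => u a ^ 2 - v a ^ 2) l (𝓝 0) := by
  have hmul : Tendsto (fun a => u a * (u a - v a)) l (𝓝 0) :=
    isBoundedUnder_le_mul_tendsto_zero (isBoundedUnder_of ⟨M, hu⟩) h
  convert (hmul.const_mul 2).sub (h.pow 2) using 2 with a <;> ring

end Limits

section Words

open FreeMonoid (of length)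

variable {α : Type*}

lemma one_le_length_iff_ne_one {w : FreeMonoid α} : 1 ≤ length w ↔ w ≠ 1 := by
  rw [Nat.one_le_iff_ne_zero, ne_eq, FreeMonoid.length_eq_zero]

lemma of_mul_ne_one (a : α) (w : FreeMonoid α) : of a * w ≠ 1 :=
  List.cons_ne_nil a w

end Words

section Fock

/-- The standard orthonormal basis of the full Fock space; its vectors are the `fockE α`. -/
def fockBasis (n : ℕ) : HilbertBasis (Word n) ℂ (Fock n) := .ofRepr (.refl ℂ (Fock n))

variable {n : ℕ}

lemma fockBasis_apply (α : Word n) : fockBasis n α = fockE α := rfl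

lemma fockE_apply (α β : Word n) : (fockE α : Fock n) β = if β = α then 1 else 0 := by
  rw [fockE, lp.single_apply, Pi.single_apply]

lemma inner_fockE_left (α : Word n) (x : Fock n) : inner ℂ (fockE α) x = x α := by
  rw [fockE, lp.inner_single_left]
  simp

lemma norm_fockE (α : Word n) : ‖(fockE α : Fock n)‖ = 1 := by
  rw [fockE, lp.norm_single (by norm_num), norm_one]

end Fock

namespace IsWeightedShift

open FreeMonoid (of)

variable {n : ℕ} {μ : Word n → ℝ} {W : Fin n → Fock n →L[ℂ] Fock n}

lemma abs_weight_le (hW : IsWeightedShift μ W) (i : Fin n) (α : Word n) :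
    |μ (of i * α)| ≤ ‖W i‖ := by
  simpa only [hW i α, norm_smul, norm_fockE, mul_one, Complex.norm_real, Real.norm_eq_abs]
    using (W i).le_opNorm (fockE α)

lemma adjoint_apply (hW : IsWeightedShift μ W) (i : Fin n) (x : Fock n) (β : Word n) :
    adjoint (W i) x β = μ (of i * β) * x (of i * β) := by
  rw [← inner_fockE_left, adjoint_inner_right, hW, inner_smul_left, inner_fockE_left,
    Complex.conj_ofReal]

lemma adjoint_fockE_one (hW : IsWeightedShift μ W) (j : Fin n) :
    adjoint (W j) (fockE 1) = 0 := by
  ext β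
  rw [hW.adjoint_apply, fockE_apply, if_neg (of_mul_ne_one j β), mul_zero]
  rfl

lemma adjoint_fockE_mul (hW : IsWeightedShift μ W) (i j : Fin n) (α : Word n) :
    adjoint (W j) (fockE (of i * α)) = if j = i then (μ (of i * α) : ℂ) • fockE α else 0 := by
  ext β
  have hcons : of j * β = of i * α ↔ j = i ∧ β = α := List.cons_eq_cons
  rw [hW.adjoint_apply, fockE_apply]
  by_cases hj : j = i
  · rw [if_pos hj, lp.coeFn_smul, Pi.smul_apply, fockE_apply, smul_eq_mul]
    by_cases hβ : β = α <;> simp [hj, hβ]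
  · simp [hcons, hj]

lemma ker_sum_comp_adjoint_eq_span (hW : IsWeightedShift μ W) (hμ : ∀ β, β ≠ 1 → μ β ≠ 0) :
    (∑ j, W j ∘L adjoint (W j)).ker = ℂ ∙ fockE 1 := by
  ext x
  simp only [ker_sum_comp_adjoint, Submodule.mem_iInf, LinearMap.mem_ker, coe_coe,
    Finset.mem_univ, forall_true_left, Submodule.mem_span_singleton]
  refine ⟨fun hx => ⟨x 1, ?_⟩, ?_⟩
  · ext β
    induction β using FreeMonoid.casesOn with
    | one => simp [fockE_apply]
    | of_mul j β =>
      have hne : of j * β ≠ 1 := of_mul_ne_one j β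
      have hzero : (μ (of j * β) : ℂ) * x (of j * β) = 0 := by
        rw [← hW.adjoint_apply, hx]
        rfl
      simpa [fockE_apply, hne, hμ _ hne, eq_comm] using hzero
  · rintro ⟨c, rfl⟩ j
    rw [map_smul, hW.adjoint_fockE_one, smul_zero]

lemma adjoint_comp_self_fockE (hW : IsWeightedShift μ W) (i : Fin n) (α : Word n) :
    (adjoint (W i) ∘L W i) (fockE α) = ((μ (of i * α) ^ 2 : ℝ) : ℂ) • fockE α := by
  rw [comp_apply, hW, map_smul, hW.adjoint_fockE_mul, if_pos rfl, smul_smul, ← sq,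
    Complex.ofReal_pow]

lemma sum_comp_adjoint_fockE (hW : IsWeightedShift μ W) (α : Word n) :
    (∑ j, W j ∘L adjoint (W j)) (fockE α) = ((if α = 1 then 0 else μ α ^ 2 : ℝ) : ℂ) • fockE α := by
  rw [sum_apply]
  induction α using FreeMonoid.casesOn with
  | one => simp [hW.adjoint_fockE_one]
  | of_mul i α =>
    rw [if_neg (of_mul_ne_one i α), Finset.sum_eq_single i (fun j _ hj => ?_) (by simp)]
    · rw [comp_apply, hW.adjoint_fockE_mul, if_pos rfl, map_smul, hW, smul_smul, ← sq,
        Complex.ofReal_pow]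
    · rw [comp_apply, hW.adjoint_fockE_mul, if_neg hj, map_zero]

lemma isCompactOperator_adjoint_comp_sub_sum (hW : IsWeightedShift μ W) {i : Fin n}
    (hi : Tendsto (fun α => μ (of i * α) ^ 2 - μ α ^ 2) cofinite (𝓝 0)) :
    IsCompactOperator (adjoint (W i) ∘L W i - ∑ j, W j ∘L adjoint (W j)) := by
  refine isCompactOperator_of_apply_hilbertBasis (fockBasis n)
    (t := fun α => ((μ (of i * α) ^ 2 - if α = 1 then 0 else μ α ^ 2 : ℝ) : ℂ)) (fun α => ?_) ?_
  · rw [fockBasis_apply, sub_apply, hW.adjoint_comp_self_fockE, hW.sum_comp_adjoint_fockE,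
      ← sub_smul, ← Complex.ofReal_sub]
  · have hne : ∀ᶠ α : Word n in cofinite, α ≠ 1 := (Set.finite_singleton 1).compl_mem_cofinite
    refine ((Complex.continuous_ofReal.tendsto' 0 0 Complex.ofReal_zero).comp hi).congr' ?_
    filter_upwards [hne] with α hα
    simp [hα]

lemma rankOne_fockE_one_mem (hW : IsWeightedShift μ W) (hμ : ∀ β, β ≠ 1 → μ β ≠ 0) {i : Fin n}
    (hi : Tendsto (fun α => μ (of i * α) ^ 2 - μ α ^ 2) cofinite (𝓝 0))
    {A : StarSubalgebra ℂ (Fock n →L[ℂ] Fock n)} (hA : IsClosed (A : Set (Fock n →L[ℂ] Fock n)))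
    (hWA : ∀ j, W j ∈ A) : rankOne ℂ (fockE 1 : Fock n) (fockE 1) ∈ A := by
  set C : Fock n →L[ℂ] Fock n := ∑ j, W j ∘L adjoint (W j) with hC
  have hC_nonneg : 0 ≤ C := Finset.sum_nonneg fun j _ => mul_star_self_nonneg (W j)
  have hCA : C ∈ A := sum_mem fun j _ => mul_mem (hWA j) (star_mem (hWA j))
  have hDA : adjoint (W i) ∘L W i - C ∈ A := sub_mem (mul_mem (star_mem (hWA i)) (hWA i)) hCA
  have hD_adjoint : adjoint (adjoint (W i) ∘L W i - C) = adjoint (W i) ∘L W i - C :=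
    ((IsSelfAdjoint.star_mul_self (W i)).sub (.of_nonneg hC_nonneg)).star_eq
  refine rankOne_mem_of_ker_eq_span_singleton hA hC_nonneg hCA
    (hW.isCompactOperator_adjoint_comp_sub_sum hi) hDA (norm_fockE 1)
    (hW.ker_sum_comp_adjoint_eq_span hμ) (c := (μ (of i) : ℂ) ^ 2) ?_ ?_
  · exact pow_ne_zero 2 (Complex.ofReal_ne_zero.2 (hμ _ (FreeMonoid.of_ne_one i)))
  · rw [hD_adjoint, sub_apply, hW.adjoint_comp_self_fockE, hC, hW.sum_comp_adjoint_fockE]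
    simp

lemma dense_image_fockE_one (hW : IsWeightedShift μ W) (hμ : ∀ β, β ≠ 1 → μ β ≠ 0)
    {A : Subalgebra ℂ (Fock n →L[ℂ] Fock n)} (hWA : ∀ j, W j ∈ A) :
    Dense ((fun T : Fock n →L[ℂ] Fock n => T (fockE 1)) '' A) := by
  have hfockE (α : Word n) : ∃ T ∈ A, T (fockE 1) = fockE α := by
    induction α using FreeMonoid.inductionOn' with
    | one => exact ⟨1, one_mem A, rfl⟩
    | of_mul i α ih =>
      obtain ⟨T, hT, hTα⟩ := ih
      have hne : (μ (of i * α) : ℂ) ≠ 0 := Complex.ofReal_ne_zero.2 (hμ _ (of_mul_ne_one i α))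
      refine ⟨(μ (of i * α) : ℂ)⁻¹ • (W i * T), A.smul_mem (mul_mem (hWA i) hT) _, ?_⟩
      rw [smul_apply, mul_apply_eq_comp, hTα, hW, inv_smul_smul₀ hne]
  have hspan : Submodule.span ℂ (Set.range (fockBasis n)) ≤
      A.toSubmodule.map (ContinuousLinearMap.apply ℂ (Fock n) (fockE (1 : Word n))).toLinearMap :=
    Submodule.span_le.2 (Set.range_subset_iff.2 hfockE)
  exact (Submodule.dense_iff_topologicalClosure_eq_top.2 (fockBasis n).dense_span).mono hspan

end IsWeightedShift

theorem stmt_11_general {n : ℕ} {μ : Word n → ℝ} {W : Fin n → Fock n →L[ℂ] Fock n}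
    (hW : IsWeightedShift μ W) (hμ : ∀ β, β ≠ 1 → μ β ≠ 0) {i : Fin n}
    (hi : Tendsto (fun α => μ (FreeMonoid.of i * α) ^ 2 - μ α ^ 2) cofinite (𝓝 0))
    {K : Fock n →L[ℂ] Fock n} (hK : IsCompactOperator K) :
    K ∈ (StarAlgebra.adjoin ℂ (Set.range W)).topologicalClosure := by
  set A := (StarAlgebra.adjoin ℂ (Set.range W)).topologicalClosure
  have hA : IsClosed (A : Set (Fock n →L[ℂ] Fock n)) := StarSubalgebra.isClosed_topologicalClosure _
  have hWA (j : Fin n) : W j ∈ A :=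
    StarSubalgebra.le_topologicalClosure _ (StarAlgebra.subset_adjoin ℂ _ ⟨j, rfl⟩)
  have hrankOne : ∀ x y, rankOne ℂ x y ∈ A :=
    rankOne_mem_of_dense hA (norm_fockE 1) (hW.rankOne_fockE_one_mem hμ hi hA hWA)
      (hW.dense_image_fockE_one hμ hWA)
  exact mem_of_isCompactOperator_of_rankOne_mem (A := A.toSubalgebra.toSubmodule) hA hrankOne hK

theorem stmt_11 (n : ℕ) (hn : 1 ≤ n) (μ : Word n → ℝ)
    (hμ : ∀ β : Word n, 1 ≤ FreeMonoid.length β → 0 < μ β)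
    (hbdd : BddWeights μ)
    (W : Fin n → Fock n →L[ℂ] Fock n) (hW : IsWeightedShift μ W)
    (hconv : ∃ i : Fin n, ∀ ε : ℝ, 0 < ε →
      {α : Word n | 1 ≤ FreeMonoid.length α ∧
        ε ≤ |μ (FreeMonoid.of i * α) - μ α|}.Finite) :
    ∀ K : Fock n →L[ℂ] Fock n, IsCompactOperator ⇑K →
      K ∈ (StarAlgebra.adjoin ℂ (Set.range W)).topologicalClosure := by
  obtain ⟨i, hi⟩ := hconv
  simp only [one_le_length_iff_ne_one] at hμ hi
  have hlim : Tendsto (fun α => μ (FreeMonoid.of i * α) - μ α) cofinite (𝓝 0) :=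
    tendsto_cofinite_zero_of_finite (by simp) hi
  exact fun K => stmt_11_general hW (fun β hβ => (hμ β hβ).ne')
    (tendsto_sq_sub_sq (hW.abs_weight_le i) hlim)

end
end

section
/- Let n ≥ 1, let H be a Hilbert space, and let T = (T₁,…,Tₙ) be an n-tuple of bounded operators on H that is not nilpotent, i.e. ∑_{α∈𝔽ₙ⁺, |α|=k} T_α T_α^* ≠ 0 for every k ≥ 1. Then there exists a strictly positive weight sequence μ = {μ_β}_{|β|≥1} satisfying sup_{α∈𝔽ₙ⁺} μ_{g_iα} < ∞ for each i, with associated weighted left multi-shift W = (W₁,…,Wₙ) on F²(Hₙ), such that: (i) ‖∑_{|α|=k} W_α W_α^*‖^{1/2} ≤ (k+1)·‖∑_{|α|=k} T_α T_α^*‖^{1/2} for every k ≥ 1; (ii) r(W) = r(T); (iii) there exist a closed subspace M ⊆ ℓ²(𝔽ₙ⁺; H) invariant under each W_i^*⊗I_H and a bounded invertible operator X : H → M with ‖X‖·‖X⁻¹‖ ≤ π/√6 and T_i^* = X⁻¹((W_i^*⊗I_H)|_M)X for each i; (iv) ‖∑_α c_α T_α‖ ≤ (π/√6)·‖∑_α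 c_α W_α‖ for every finitely supported family (c_α)_{α∈𝔽ₙ⁺} of complex numbers, and the spectral radius of ∑_α c_α T_α is at most that of ∑_α c_α W_α. -/
open Filter ContinuousLinearMap
open scoped ComplexConjugate

noncomputable section

attribute [local instance] Classical.decEq

/-!
The sequence `b_k = (k + 1) ‖∑_{|α| = k} T_α T_α*‖^{1/2}` is submultiplicative, so the weights
`μ_β = b_{|β|} / b_{|β| - 1}` are bounded. Their products telescope: `W_β* e_{βα} = (b_{|βα|} /
b_{|α|}) e_α`, and by submultiplicativity the row `(W_β)_{|β| = k}` has norm exactly `b_k`; the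
factor `k + 1` disappears in the joint spectral radius. The map `X h = ∑_α b_{|α|}⁻¹ e_α ⊗ T_α* h`
intertwines `T_i*` with `W_i* ⊗ I`, and summing over the levels `|α| = k` gives
`‖h‖² ≤ ‖X h‖² ≤ ∑_k (k + 1)⁻² ‖h‖² = (π² / 6) ‖h‖²`. An orthonormal basis of `H` decomposes `W ⊗ I`
into copies of `W`, so polynomials in `T` are bounded by polynomials in `W` up to the factor
`π / √6`, which Gelfand's formula removes for the spectral radii.
-/

section SquareSummable

variable {ι κ 𝕜 V E : Type*} [RCLike 𝕜] [NormedAddCommGroup V] [NormedSpace 𝕜 V]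
  [NormedAddCommGroup E]

theorem hasSum_norm_sq_lp (y : lp (fun _ : ι => E) 2) :
    HasSum (fun i => ‖y i‖ ^ 2) (‖y‖ ^ 2) := by
  simpa using lp.hasSum_norm (p := 2) (by norm_num) y

theorem sum_norm_sq_comp_le_norm_sq {φ : ι → κ} (hφ : Function.Injective φ)
    (y : lp (fun _ : κ => E) 2) (s : Finset ι) : ∑ i ∈ s, ‖y (φ i)‖ ^ 2 ≤ ‖y‖ ^ 2 := by
  simpa using lp.sum_rpow_le_norm_rpow (p := 2) (by norm_num) y (s.map ⟨φ, hφ⟩)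

variable [NormedSpace 𝕜 E]

/-- The analysis operator `v ↦ (A i v)ᵢ` into `ℓ²` of a family of operators satisfying the Bessel
inequality with bound `K`. -/
def analysisCLM (A : ι → V →L[𝕜] E) {K : ℝ} (hK : 0 ≤ K)
    (hA : ∀ v (s : Finset ι), ∑ i ∈ s, ‖A i v‖ ^ 2 ≤ (K * ‖v‖) ^ 2) :
    V →L[𝕜] lp (fun _ : ι => E) 2 :=
  LinearMap.mkContinuous
    { toFun v := ⟨fun i => A i v, memℓp_gen' (C := (K * ‖v‖) ^ 2) (by simpa using hA v)⟩
      map_add' u v := by ext i; exact map_add (A i) u v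
      map_smul' c v := by ext i; exact map_smul (A i) c v }
    K fun v => lp.norm_le_of_forall_sum_le (by norm_num) (by positivity) (by simpa using hA v)

theorem norm_analysisCLM_le (A : ι → V →L[𝕜] E) {K : ℝ} (hK : 0 ≤ K)
    (hA : ∀ v (s : Finset ι), ∑ i ∈ s, ‖A i v‖ ^ 2 ≤ (K * ‖v‖) ^ 2) :
    ‖analysisCLM A hK hA‖ ≤ K :=
  LinearMap.mkContinuous_norm_le _ hK _

theorem sum_norm_sq_smul_comp_le {m : ι → 𝕜} {C : ℝ} (hm : ∀ i, ‖m i‖ ≤ C) {φ : ι → κ}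
    (hφ : Function.Injective φ) (y : lp (fun _ : κ => E) 2) (s : Finset ι) :
    ∑ i ∈ s, ‖m i • y (φ i)‖ ^ 2 ≤ (C * ‖y‖) ^ 2 := by
  calc ∑ i ∈ s, ‖m i • y (φ i)‖ ^ 2 ≤ ∑ i ∈ s, C ^ 2 * ‖y (φ i)‖ ^ 2 := by
        simp only [norm_smul, mul_pow]
        gcongr with i
        exact hm i
    _ = C ^ 2 * ∑ i ∈ s, ‖y (φ i)‖ ^ 2 := (Finset.mul_sum ..).symm
    _ ≤ C ^ 2 * ‖y‖ ^ 2 := by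
        gcongr
        exact sum_norm_sq_comp_le_norm_sq hφ y s
    _ = (C * ‖y‖) ^ 2 := (mul_pow ..).symm

/-- The weighted composition operator `y ↦ (m i • y (φ i))ᵢ` on `ℓ²`, for a bounded weight `m` and
an injective `φ`. -/
def weightedCompCLM (E : Type*) [NormedAddCommGroup E] [NormedSpace 𝕜 E]
    (m : lp (fun _ : ι => 𝕜) ⊤) {φ : ι → κ} (hφ : Function.Injective φ) :
    lp (fun _ : κ => E) 2 →L[𝕜] lp (fun _ : ι => E) 2 :=
  analysisCLM (fun i => m i • lp.evalCLM 𝕜 (fun _ : κ => E) 2 (φ i)) (norm_nonneg m)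
    (sum_norm_sq_smul_comp_le (lp.norm_apply_le_norm ENNReal.top_ne_zero m) hφ)

@[simp]
theorem weightedCompCLM_apply (m : lp (fun _ : ι => 𝕜) ⊤) {φ : ι → κ}
    (hφ : Function.Injective φ) (y : lp (fun _ : κ => E) 2) (i : ι) :
    weightedCompCLM E m hφ y i = m i • y (φ i) := rfl

end SquareSummable

section Slices

variable {ι κ 𝕜 E : Type*} [RCLike 𝕜] [NormedAddCommGroup E] [InnerProductSpace 𝕜 E]

/-- The slice map `y ↦ (⟪v, y i⟫)ᵢ`, i.e. the operator `I ⊗ ⟪v, ·⟫` on `ℓ²(ι; E) = ℓ²(ι) ⊗ E`. -/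
def sliceCLM (𝕜 ι : Type*) [RCLike 𝕜] [InnerProductSpace 𝕜 E] (v : E) :
    lp (fun _ : ι => E) 2 →L[𝕜] lp (fun _ : ι => 𝕜) 2 :=
  lp.mapCLM 2 (fun _ => innerSL 𝕜 v) (norm_nonneg v) fun _ => (innerSL_apply_norm 𝕜 v).le

@[simp]
theorem sliceCLM_apply (v : E) (y : lp (fun _ : ι => E) 2) (i : ι) :
    sliceCLM 𝕜 ι v y i = inner 𝕜 v (y i) := rfl

theorem hasSum_norm_sq_sliceCLM (b : HilbertBasis κ 𝕜 E) (y : lp (fun _ : ι => E) 2) :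
    HasSum (fun j => ‖sliceCLM 𝕜 ι (b j) y‖ ^ 2) (‖y‖ ^ 2) := by
  have parseval (i : ι) : HasSum (fun j => ‖(inner 𝕜 (b j) (y i) : 𝕜)‖ ^ 2) (‖y i‖ ^ 2) := by
    simpa [b.repr_apply_apply] using hasSum_norm_sq_lp (b.repr (y i))
  have summable_entries : Summable fun p : ι × κ => ‖(inner 𝕜 (b p.2) (y p.1) : 𝕜)‖ ^ 2 := by
    refine (summable_prod_of_nonneg fun _ => by positivity).2
      ⟨fun i => (parseval i).summable, ?_⟩
    simpa only [(parseval _).tsum_eq] using (hasSum_norm_sq_lp y).summable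
  have hasSum_entries := summable_entries.hasSum
  rw [(hasSum_entries.prod_fiberwise parseval).unique (hasSum_norm_sq_lp y)] at hasSum_entries
  exact ((Equiv.prodComm κ ι).hasSum_iff.2 hasSum_entries).prod_fiberwise
    fun j => hasSum_norm_sq_lp (sliceCLM 𝕜 ι (b j) y)

end Slices

section Columns

variable {ι 𝕜 E F : Type*} [Fintype ι] [RCLike 𝕜]
  [NormedAddCommGroup E] [InnerProductSpace 𝕜 E] [CompleteSpace E]
  [NormedAddCommGroup F] [InnerProductSpace 𝕜 F] [CompleteSpace F]

theorem norm_sum_comp_adjoint_le_iff (A : ι → F →L[𝕜] E) {M : ℝ} (hM : 0 ≤ M) :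
    ‖∑ i, A i ∘L adjoint (A i)‖ ≤ M ↔ ∀ x, ∑ i, ‖adjoint (A i) x‖ ^ 2 ≤ M * ‖x‖ ^ 2 := by
  let column : E →L[𝕜] PiLp 2 (fun _ : ι => F) :=
    (PiLp.continuousLinearEquiv 2 𝕜 fun _ : ι => F).symm ∘L
      ContinuousLinearMap.pi fun i => adjoint (A i)
  have sum_eq : ∑ i, A i ∘L adjoint (A i) = adjoint column ∘L column := by
    refine ContinuousLinearMap.ext fun x => ext_inner_right 𝕜 fun y => ?_
    simp [column, adjoint_inner_left, PiLp.inner_apply, sum_inner, adjoint_inner_right]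
  have norm_column_sq (x : E) : ‖column x‖ ^ 2 = ∑ i, ‖adjoint (A i) x‖ ^ 2 :=
    PiLp.norm_sq_eq_of_L2 _ _
  rw [sum_eq, norm_adjoint_comp_self, ← sq, ← Real.le_sqrt (norm_nonneg _) hM,
    opNorm_le_iff (Real.sqrt_nonneg M)]
  refine forall_congr' fun x => ?_
  rw [← norm_column_sq, ← sq_le_sq₀ (norm_nonneg _) (by positivity), mul_pow, Real.sq_sqrt hM]

end Columns

section Limits

theorem exists_tendsto_rpow_one_div_of_submultiplicative {a : ℕ → ℝ} (ha : ∀ k, 0 ≤ a k)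
    (hmul : ∀ m k, a (m + k) ≤ a m * a k) :
    ∃ r, Tendsto (fun k : ℕ => a k ^ (1 / k : ℝ)) atTop (nhds r) := by
  by_cases hzero : ∃ m, a m = 0
  · obtain ⟨m, hm⟩ := hzero
    refine ⟨0, tendsto_const_nhds.congr' ?_⟩
    filter_upwards [eventually_ge_atTop m, eventually_gt_atTop 0] with k hmk hk
    have hak : a k ≤ 0 := by simpa [hm, hmk] using hmul m (k - m)
    rw [hak.antisymm (ha k), Real.zero_rpow (by positivity)]
  push Not at hzero
  have hpos (k : ℕ) : 0 < a k := (ha k).lt_of_ne' (hzero k)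
  have hsub : Subadditive fun k => Real.log (a k) := fun m k => by
    rw [← Real.log_mul (hpos m).ne' (hpos k).ne']
    exact Real.log_le_log (hpos _) (hmul m k)
  have hexp (k : ℕ) : Real.exp (Real.log (a k) / k) = a k ^ (1 / k : ℝ) := by
    rw [Real.rpow_def_of_pos (hpos k), mul_one_div]
  simp only [← hexp]
  by_cases hbdd : BddBelow (Set.range fun k : ℕ => Real.log (a k) / k)
  · exact ⟨_, (Real.continuous_exp.tendsto _).comp (hsub.tendsto_lim hbdd)⟩
  · refine ⟨0, Real.tendsto_exp_atBot.comp (tendsto_atBot.2 fun L => ?_)⟩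
    obtain ⟨_, ⟨k, rfl⟩, hk⟩ := not_bddBelow_iff.1 hbdd (min L 0)
    have hk0 : k ≠ 0 := by
      rintro rfl
      simp at hk
    exact (hsub.eventually_div_lt_of_div_lt hk0 (hk.trans_le (min_le_left _ _))).mono
      fun _ => le_of_lt

theorem tendsto_natCast_add_one_sq_rpow_one_div :
    Tendsto (fun k : ℕ => (((k : ℝ) + 1) ^ 2) ^ ((1 : ℝ) / (2 * k))) atTop (nhds 1) := by
  refine ((tendsto_rpow_div_mul_add 1 1 (-1) zero_ne_one).comp
    (tendsto_atTop_add_const_right atTop 1 tendsto_natCast_atTop_atTop)).congr fun k => ?_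
  rw [Function.comp_apply, ← Real.rpow_natCast, ← Real.rpow_mul (by positivity)]
  congr 1
  push_cast
  ring

theorem spectralRadius_le_of_norm_pow_le {A B : Type*} [NormedRing A] [NormedAlgebra ℂ A]
    [CompleteSpace A] [NormedRing B] [NormedAlgebra ℂ B] [CompleteSpace B] {a : A} {b : B} {C : ℝ}
    (hC : 0 < C) (h : ∀ m : ℕ, ‖a ^ m‖ ≤ C * ‖b ^ m‖) :
    spectralRadius ℂ a ≤ spectralRadius ℂ b := by
  have hroot : Tendsto (fun m : ℕ => ENNReal.ofReal (C ^ (1 / m : ℝ))) atTop (nhds 1) := by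
    simpa using ENNReal.tendsto_ofReal ((tendsto_const_nhds (x := C)).rpow
      tendsto_one_div_atTop_nhds_zero_nat (Or.inl hC.ne'))
  have hlim := ENNReal.Tendsto.mul hroot (Or.inl one_ne_zero)
    (spectrum.pow_norm_pow_one_div_tendsto_nhds_spectralRadius b) (Or.inr ENNReal.one_ne_top)
  rw [one_mul] at hlim
  refine le_of_tendsto_of_tendsto'
    (spectrum.pow_norm_pow_one_div_tendsto_nhds_spectralRadius a) hlim fun m => ?_
  rw [← ENNReal.ofReal_mul (by positivity), ← Real.mul_rpow hC.le (norm_nonneg _)]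
  gcongr
  exact h m

end Limits

section WordOperators

variable {n : ℕ} {E : Type*} [NormedAddCommGroup E] [InnerProductSpace ℂ E]

theorem wordOp_one (T : Fin n → E →L[ℂ] E) : wordOp T 1 = 1 := rfl

theorem wordOp_mul (T : Fin n → E →L[ℂ] E) (α β : Word n) :
    wordOp T (α * β) = wordOp T α * wordOp T β := by
  simp only [wordOp, FreeMonoid.toList_mul, List.map_append, List.prod_append]

theorem wordOp_of (T : Fin n → E →L[ℂ] E) (i : Fin n) : wordOp T (FreeMonoid.of i) = T i :=
  mul_one (T i)

theorem length_wordOfFn {k : ℕ} (f : Fin k → Fin n) : FreeMonoid.length (wordOfFn f) = k :=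
  List.length_ofFn

theorem wordOfFn_append {m k : ℕ} (f : Fin m → Fin n) (g : Fin k → Fin n) :
    wordOfFn (Fin.append f g) = wordOfFn f * wordOfFn g :=
  congrArg FreeMonoid.ofList (List.ofFn_fin_append f g)

theorem wordOfFn_mul_injective (k : ℕ) :
    Function.Injective fun p : (Fin k → Fin n) × Word n => wordOfFn p.1 * p.2 := by
  rintro ⟨f, γ⟩ ⟨g, δ⟩ h
  obtain ⟨hfg, hγδ⟩ := List.append_inj h (by simp [wordOfFn])
  exact Prod.ext (List.ofFn_injective hfg) hγδ

theorem sum_length_eq_le_sum_wordOfFn {F : Word n → ℝ} (hF : ∀ α, 0 ≤ F α) (s : Finset (Word n))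
    (k : ℕ) :
    ∑ α ∈ s with FreeMonoid.length α = k, F α ≤ ∑ f : Fin k → Fin n, F (wordOfFn f) := by
  have wordOfFn_injective : Function.Injective (wordOfFn : (Fin k → Fin n) → Word n) :=
    List.ofFn_injective
  rw [← Finset.sum_image (f := F) wordOfFn_injective.injOn]
  refine Finset.sum_le_sum_of_subset_of_nonneg (fun α hα => ?_) fun α _ _ => hF α
  obtain rfl := (Finset.mem_filter.1 hα).2
  exact Finset.mem_image.2 ⟨_, Finset.mem_univ _, List.ofFn_get α⟩

end WordOperators

section RowSums

variable {n : ℕ} {E F : Type*}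
  [NormedAddCommGroup E] [InnerProductSpace ℂ E] [CompleteSpace E]
  [NormedAddCommGroup F] [InnerProductSpace ℂ F] [CompleteSpace F]

theorem norm_rowSum_le_iff (T : Fin n → E →L[ℂ] E) (k : ℕ) {M : ℝ} (hM : 0 ≤ M) :
    ‖rowSum T k‖ ≤ M ↔
      ∀ x, ∑ f : Fin k → Fin n, ‖adjoint (wordOp T (wordOfFn f)) x‖ ^ 2 ≤ M * ‖x‖ ^ 2 :=
  norm_sum_comp_adjoint_le_iff (fun f : Fin k → Fin n => wordOp T (wordOfFn f)) hM

theorem sum_norm_sq_adjoint_wordOp_le (T : Fin n → E →L[ℂ] E) (k : ℕ) (x : E) :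
    ∑ f : Fin k → Fin n, ‖adjoint (wordOp T (wordOfFn f)) x‖ ^ 2 ≤ ‖rowSum T k‖ * ‖x‖ ^ 2 :=
  (norm_rowSum_le_iff T k (norm_nonneg _)).1 le_rfl x

theorem norm_rowSum_zero [Nontrivial E] (T : Fin n → E →L[ℂ] E) : ‖rowSum T 0‖ = 1 := by
  have rowSum_zero : rowSum T 0 = 1 := by
    simp [rowSum, wordOfFn, wordOp_one, ← star_eq_adjoint]
  rw [rowSum_zero, norm_one]

theorem adjoint_wordOp_mul_apply (T : Fin n → E →L[ℂ] E) (α β : Word n) (x : E) :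
    adjoint (wordOp T (α * β)) x = adjoint (wordOp T β) (adjoint (wordOp T α) x) := by
  rw [wordOp_mul, ContinuousLinearMap.mul_def, adjoint_comp, comp_apply]

theorem norm_rowSum_add_le (T : Fin n → E →L[ℂ] E) (m k : ℕ) :
    ‖rowSum T (m + k)‖ ≤ ‖rowSum T m‖ * ‖rowSum T k‖ := by
  refine (norm_rowSum_le_iff T _ (by positivity)).2 fun x => ?_
  calc ∑ h : Fin (m + k) → Fin n, ‖adjoint (wordOp T (wordOfFn h)) x‖ ^ 2
      = ∑ f : Fin m → Fin n, ∑ g : Fin k → Fin n,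
          ‖adjoint (wordOp T (wordOfFn g)) (adjoint (wordOp T (wordOfFn f)) x)‖ ^ 2 := by
        rw [← (Fin.appendEquiv m k).sum_comp, Fintype.sum_prod_type]
        simp only [Fin.appendEquiv, Equiv.coe_fn_mk, wordOfFn_append, adjoint_wordOp_mul_apply]
    _ ≤ ∑ f : Fin m → Fin n, ‖rowSum T k‖ * ‖adjoint (wordOp T (wordOfFn f)) x‖ ^ 2 := by
        gcongr with f
        exact sum_norm_sq_adjoint_wordOp_le T k _
    _ = ‖rowSum T k‖ * ∑ f : Fin m → Fin n, ‖adjoint (wordOp T (wordOfFn f)) x‖ ^ 2 :=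
        (Finset.mul_sum ..).symm
    _ ≤ ‖rowSum T k‖ * (‖rowSum T m‖ * ‖x‖ ^ 2) := by
        gcongr
        exact sum_norm_sq_adjoint_wordOp_le T m x
    _ = ‖rowSum T m‖ * ‖rowSum T k‖ * ‖x‖ ^ 2 := by ring

theorem tendsto_jsr (T : Fin n → E →L[ℂ] E) :
    Tendsto (fun k : ℕ => ‖rowSum T k‖ ^ ((1 : ℝ) / (2 * k))) atTop (nhds (jsr T)) := by
  obtain ⟨r, hr⟩ := exists_tendsto_rpow_one_div_of_submultiplicative
    (fun k => norm_nonneg (rowSum T k)) (norm_rowSum_add_le T)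
  refine tendsto_nhds_limUnder ⟨r ^ (1 / 2 : ℝ), ?_⟩
  refine (hr.rpow_const (p := 1 / 2) (Or.inr (by norm_num))).congr fun k => ?_
  rw [← Real.rpow_mul (norm_nonneg _), one_div_mul_one_div, mul_comm]

theorem jsr_eq_of_norm_rowSum_eq_mul {T : Fin n → E →L[ℂ] E} {R : Fin n → F →L[ℂ] F} {c : ℕ → ℝ}
    (hc : ∀ k, 0 ≤ c k) (hc_lim : Tendsto (fun k : ℕ => c k ^ ((1 : ℝ) / (2 * k))) atTop (nhds 1))
    (h : ∀ k, ‖rowSum R k‖ = c k * ‖rowSum T k‖) : jsr R = jsr T := by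
  refine tendsto_nhds_unique (tendsto_jsr R) ?_
  simpa only [h, Real.mul_rpow (hc _) (norm_nonneg _), one_mul] using hc_lim.mul (tendsto_jsr T)

end RowSums

section Intertwining

variable {n : ℕ} {E F : Type*}
  [NormedAddCommGroup E] [InnerProductSpace ℂ E] [NormedAddCommGroup F] [InnerProductSpace ℂ F]

theorem lift_lift_eq_polyOp (T : Fin n → E →L[ℂ] E) (x : MonoidAlgebra ℂ (Word n)) :
    MonoidAlgebra.lift ℂ (E →L[ℂ] E) (Word n) (FreeMonoid.lift T) x = polyOp T x.coeff := by
  simp only [MonoidAlgebra.lift_apply, FreeMonoid.lift_apply, polyOp, wordOp]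

theorem polyOp_pow (T : Fin n → E →L[ℂ] E) (co : Word n →₀ ℂ) (m : ℕ) :
    polyOp T (MonoidAlgebra.ofCoeff co ^ m).coeff = polyOp T co ^ m := by
  rw [← lift_lift_eq_polyOp, map_pow, lift_lift_eq_polyOp]

variable [CompleteSpace E] [CompleteSpace F]

theorem adjoint_polyOp_apply (T : Fin n → E →L[ℂ] E) (co : Word n →₀ ℂ) (x : E) :
    adjoint (polyOp T co) x = co.sum fun α z => conj z • adjoint (wordOp T α) x := by
  simp only [polyOp, Finsupp.sum, map_sum, map_smulₛₗ, sum_apply, smul_apply]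

theorem norm_adjoint_polyOp_apply_le (T : Fin n → E →L[ℂ] E) (co : Word n →₀ ℂ) (x : E) :
    ‖adjoint (polyOp T co) x‖ ≤ ‖polyOp T co‖ * ‖x‖ := by
  simpa using le_opNorm (adjoint (polyOp T co)) x

/-- `Y` intertwines the adjoints of the tuples `T` and `R`: `Y Tᵢ* = Rᵢ* Y` for all `i`. If `Y` is
bounded below, this says that `T` is similar to the compression of `R` to the co-invariant
subspace `range Y`. -/
def IntertwinesAdjoints (Y : E →L[ℂ] F) (T : Fin n → E →L[ℂ] E) (R : Fin n → F →L[ℂ] F) : Prop :=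
  ∀ i, Y.comp (adjoint (T i)) = (adjoint (R i)).comp Y

namespace IntertwinesAdjoints

variable {Y : E →L[ℂ] F} {T : Fin n → E →L[ℂ] E} {R : Fin n → F →L[ℂ] F}

theorem wordOp_apply (hY : IntertwinesAdjoints Y T R) (α : Word n) (x : E) :
    Y (adjoint (wordOp T α) x) = adjoint (wordOp R α) (Y x) := by
  induction α using FreeMonoid.inductionOn' generalizing x with
  | one => simp [wordOp_one, ← star_eq_adjoint]
  | of_mul i α ih =>
    rw [adjoint_wordOp_mul_apply, ih, adjoint_wordOp_mul_apply, wordOp_of, wordOp_of]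
    exact congrArg _ (DFunLike.congr_fun (hY i) x)

theorem polyOp_apply (hY : IntertwinesAdjoints Y T R) (co : Word n →₀ ℂ) (x : E) :
    Y (adjoint (polyOp T co) x) = adjoint (polyOp R co) (Y x) := by
  simp only [adjoint_polyOp_apply, Finsupp.sum, map_sum, map_smul, hY.wordOp_apply]

theorem adjoint_mem_range (hY : IntertwinesAdjoints Y T R) (i : Fin n) :
    ∀ y ∈ Set.range Y, adjoint (R i) y ∈ Set.range Y := by
  rintro _ ⟨x, rfl⟩
  exact ⟨adjoint (T i) x, DFunLike.congr_fun (hY i) x⟩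

theorem norm_polyOp_le (hY : IntertwinesAdjoints Y T R) {c : ℝ} (hc : 0 < c)
    (hYc : ∀ x, c * ‖x‖ ≤ ‖Y x‖) (co : Word n →₀ ℂ) :
    ‖polyOp T co‖ ≤ ‖Y‖ * c⁻¹ * ‖polyOp R co‖ := by
  rw [← LinearIsometryEquiv.norm_map adjoint (polyOp T co)]
  refine opNorm_le_bound _ (by positivity) fun x => ?_
  have key : c * ‖adjoint (polyOp T co) x‖ ≤ ‖polyOp R co‖ * (‖Y‖ * ‖x‖) := by
    calc c * ‖adjoint (polyOp T co) x‖ ≤ ‖adjoint (polyOp R co) (Y x)‖ := by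
          rw [← hY.polyOp_apply]
          exact hYc _
      _ ≤ ‖polyOp R co‖ * ‖Y x‖ := norm_adjoint_polyOp_apply_le R co _
      _ ≤ ‖polyOp R co‖ * (‖Y‖ * ‖x‖) := by
          gcongr
          exact le_opNorm _ _
  calc ‖adjoint (polyOp T co) x‖ ≤ c⁻¹ * (‖polyOp R co‖ * (‖Y‖ * ‖x‖)) :=
        (le_inv_mul_iff₀ hc).2 key
    _ = ‖Y‖ * c⁻¹ * ‖polyOp R co‖ * ‖x‖ := by ring

end IntertwinesAdjoints

theorem norm_polyOp_le_of_hasSum {J : Type*} {Y : J → E →L[ℂ] F} {T : Fin n → E →L[ℂ] E}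
    {R : Fin n → F →L[ℂ] F} (hY : ∀ j, IntertwinesAdjoints (Y j) T R)
    (hsum : ∀ x, HasSum (fun j => ‖Y j x‖ ^ 2) (‖x‖ ^ 2)) (co : Word n →₀ ℂ) :
    ‖polyOp T co‖ ≤ ‖polyOp R co‖ := by
  rw [← LinearIsometryEquiv.norm_map adjoint (polyOp T co)]
  refine opNorm_le_bound _ (norm_nonneg _) fun x => ?_
  rw [← sq_le_sq₀ (norm_nonneg _) (by positivity), mul_pow]
  refine hasSum_le (fun j => ?_) (hsum _) ((hsum x).mul_left _)
  rw [(hY j).polyOp_apply, ← mul_pow]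
  gcongr
  exact norm_adjoint_polyOp_apply_le R co _

theorem spectralRadius_polyOp_le {T : Fin n → E →L[ℂ] E} {R : Fin n → F →L[ℂ] F} {C : ℝ}
    (hC : 0 < C) (h : ∀ co, ‖polyOp T co‖ ≤ C * ‖polyOp R co‖) (co : Word n →₀ ℂ) :
    spectralRadius ℂ (polyOp T co) ≤ spectralRadius ℂ (polyOp R co) :=
  spectralRadius_le_of_norm_pow_le hC fun m => by
    simpa only [polyOp_pow] using h (MonoidAlgebra.ofCoeff co ^ m).coeff

end Intertwining

section WeightedShifts

variable {n : ℕ} {E : Type*} [NormedAddCommGroup E] [InnerProductSpace ℂ E]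

theorem muProd_one (μ : Word n → ℝ) (α : Word n) : muProd μ 1 α = 1 := rfl

theorem muProd_of_mul (μ : Word n → ℝ) (i : Fin n) (β α : Word n) :
    muProd μ (FreeMonoid.of i * β) α = μ (FreeMonoid.of i * β * α) * muProd μ β α := by
  simp only [muProd, FreeMonoid.length_mul, FreeMonoid.length_of, Nat.add_comm 1,
    List.range_succ_eq_map, List.map_cons, List.map_map, List.prod_cons]
  rfl

variable [CompleteSpace E]

/-- The weighted left multi-shift on `ℓ²(Word n; E) = F²(Hₙ) ⊗ E`, defined through its adjoint. -/
def weightedShift (E : Type*) [NormedAddCommGroup E] [InnerProductSpace ℂ E] [CompleteSpace E]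
    (μ : Word n → ℝ) (hμ : BddWeights fun β => |μ β|) (i : Fin n) :
    lp (fun _ : Word n => E) 2 →L[ℂ] lp (fun _ : Word n => E) 2 :=
  adjoint (weightedCompCLM E
    ⟨fun γ => (μ (FreeMonoid.of i * γ) : ℂ), memℓp_infty (by simpa using hμ i)⟩
    (mul_right_injective (FreeMonoid.of i)))

variable {μ : Word n → ℝ} (hμ : BddWeights fun β => |μ β|)

theorem adjoint_weightedShift_apply (i : Fin n) (y : lp (fun _ : Word n => E) 2) (γ : Word n) :
    adjoint (weightedShift E μ hμ i) y γ
      = (μ (FreeMonoid.of i * γ) : ℂ) • y (FreeMonoid.of i * γ) := by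
  rw [weightedShift, adjoint_adjoint, weightedCompCLM_apply]

theorem isWeightedShiftTensor_weightedShift : IsWeightedShiftTensor μ (weightedShift E μ hμ) := by
  intro i α h
  refine ext_inner_right ℂ fun y => ?_
  rw [← adjoint_inner_right, lp.inner_single_left, adjoint_weightedShift_apply, inner_smul_left,
    lp.inner_single_left, inner_smul_right, Complex.conj_ofReal]

theorem isWeightedShift_weightedShift : IsWeightedShift μ (weightedShift ℂ μ hμ) :=
  fun i α => isWeightedShiftTensor_weightedShift hμ i α 1

theorem intertwinesAdjoints_sliceCLM (v : E) :
    IntertwinesAdjoints (sliceCLM ℂ (Word n) v) (weightedShift E μ hμ) (weightedShift ℂ μ hμ) := by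
  intro i
  ext y γ
  simp only [comp_apply, sliceCLM_apply, adjoint_weightedShift_apply, inner_smul_right, smul_eq_mul]

theorem norm_polyOp_weightedShift_le (co : Word n →₀ ℂ) :
    ‖polyOp (weightedShift E μ hμ) co‖ ≤ ‖polyOp (weightedShift ℂ μ hμ) co‖ := by
  obtain ⟨_, b, -⟩ := exists_hilbertBasis ℂ E
  exact norm_polyOp_le_of_hasSum (fun j => intertwinesAdjoints_sliceCLM hμ (b j))
    (hasSum_norm_sq_sliceCLM b) co

theorem adjoint_wordOp_weightedShift_apply (β : Word n) (y : lp (fun _ : Word n => E) 2)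
    (γ : Word n) :
    adjoint (wordOp (weightedShift E μ hμ) β) y γ = (muProd μ β γ : ℂ) • y (β * γ) := by
  induction β using FreeMonoid.inductionOn' generalizing y with
  | one => simp [wordOp_one, muProd_one, ← star_eq_adjoint]
  | of_mul i β ih =>
    rw [adjoint_wordOp_mul_apply, ih, wordOp_of, adjoint_weightedShift_apply, muProd_of_mul,
      smul_smul, ← Complex.ofReal_mul, mul_comm (muProd μ β γ), mul_assoc]

theorem norm_rowSum_weightedShift_le {k : ℕ} {M : ℝ} (hM : 0 ≤ M)
    (h : ∀ (f : Fin k → Fin n) γ, muProd μ (wordOfFn f) γ ^ 2 ≤ M) :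
    ‖rowSum (weightedShift E μ hμ) k‖ ≤ M := by
  refine (norm_rowSum_le_iff _ k hM).2 fun y => ?_
  refine hasSum_le_of_sum_le (hasSum_sum fun f _ => hasSum_norm_sq_lp _) fun s => ?_
  calc ∑ γ ∈ s, ∑ f : Fin k → Fin n,
          ‖adjoint (wordOp (weightedShift E μ hμ) (wordOfFn f)) y γ‖ ^ 2
      ≤ ∑ γ ∈ s, ∑ f : Fin k → Fin n, M * ‖y (wordOfFn f * γ)‖ ^ 2 := by
        simp only [adjoint_wordOp_weightedShift_apply, norm_smul, mul_pow, Complex.norm_real,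
          Real.norm_eq_abs, sq_abs]
        gcongr with γ _ f
        exact h f γ
    _ = M * ∑ p ∈ Finset.univ ×ˢ s, ‖y (wordOfFn p.1 * p.2)‖ ^ 2 := by
        rw [Finset.mul_sum, Finset.sum_product_right]
    _ ≤ M * ‖y‖ ^ 2 := by
        gcongr
        exact sum_norm_sq_comp_le_norm_sq (wordOfFn_mul_injective k) y _

theorem sq_muProd_le_norm_rowSum_weightedShift [Nontrivial E] {k : ℕ} (f : Fin k → Fin n)
    (γ : Word n) : muProd μ (wordOfFn f) γ ^ 2 ≤ ‖rowSum (weightedShift E μ hμ) k‖ := by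
  obtain ⟨v, hv⟩ := exists_ne (0 : E)
  let adjW (g : Fin k → Fin n) := adjoint (wordOp (weightedShift E μ hμ) (wordOfFn g))
  let y : lp (fun _ : Word n => E) 2 := lp.single 2 (wordOfFn f * γ) v
  have norm_y : ‖y‖ = ‖v‖ := by rw [lp.norm_single (by norm_num)]
  have y_apply : y (wordOfFn f * γ) = v := lp.single_apply_self (E := fun _ => E) 2 _ v
  refine le_of_mul_le_mul_right ?_ (pow_pos (norm_pos_iff.2 hv) 2)
  calc muProd μ (wordOfFn f) γ ^ 2 * ‖v‖ ^ 2 = ‖adjW f y γ‖ ^ 2 := by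
        rw [adjoint_wordOp_weightedShift_apply, y_apply, norm_smul, mul_pow, Complex.norm_real,
          Real.norm_eq_abs, sq_abs]
    _ ≤ ‖adjW f y‖ ^ 2 := by
        gcongr
        exact lp.norm_apply_le_norm (by norm_num) _ γ
    _ ≤ ∑ g, ‖adjW g y‖ ^ 2 :=
        Finset.single_le_sum (f := fun g => ‖adjW g y‖ ^ 2) (fun _ _ => by positivity)
          (Finset.mem_univ f)
    _ ≤ ‖rowSum (weightedShift E μ hμ) k‖ * ‖v‖ ^ 2 := by
        rw [← norm_y]
        exact sum_norm_sq_adjoint_wordOp_le (weightedShift E μ hμ) k y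

end WeightedShifts

section RadialWeights

variable {n : ℕ} {b : ℕ → ℝ}

/-- The weights depending only on word length whose products telescope to quotients of `b`. The
truncated subtraction matters only at the empty word, which is never used as an index. -/
def radialWeight (b : ℕ → ℝ) (β : Word n) : ℝ :=
  b (FreeMonoid.length β) / b (FreeMonoid.length β - 1)

theorem radialWeight_pos (hb : ∀ k, 0 < b k) (β : Word n) : 0 < radialWeight b β :=
  div_pos (hb _) (hb _)

theorem radialWeight_of_mul (b : ℕ → ℝ) (i : Fin n) (γ : Word n) :
    radialWeight b (FreeMonoid.of i * γ)
      = b (FreeMonoid.length γ + 1) / b (FreeMonoid.length γ) := by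
  simp [radialWeight, FreeMonoid.length_mul, add_comm]

theorem radialWeight_of_mul_mul_inv (hb : ∀ k, b k ≠ 0) (i : Fin n) (γ : Word n) :
    radialWeight b (FreeMonoid.of i * γ) * (b (FreeMonoid.length γ + 1))⁻¹
      = (b (FreeMonoid.length γ))⁻¹ := by
  rw [radialWeight_of_mul, div_mul_eq_mul_div, mul_inv_cancel₀ (hb _), one_div]

theorem muProd_radialWeight (hb : ∀ k, b k ≠ 0) (β α : Word n) :
    muProd (radialWeight b) β α
      = b (FreeMonoid.length β + FreeMonoid.length α) / b (FreeMonoid.length α) := by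
  induction β using FreeMonoid.inductionOn' with
  | one => simp [muProd_one, hb]
  | of_mul i β ih =>
    rw [muProd_of_mul, ih, mul_assoc, radialWeight_of_mul, FreeMonoid.length_mul,
      FreeMonoid.length_mul, FreeMonoid.length_of, div_mul_div_cancel₀ (hb _), add_comm 1,
      add_right_comm]

theorem bddWeights_abs_radialWeight (hb : ∀ k, 0 < b k) (hmul : ∀ m k, b (m + k) ≤ b m * b k) :
    BddWeights fun β : Word n => |radialWeight b β| := by
  intro i
  refine ⟨b 1, ?_⟩
  rintro _ ⟨γ, rfl⟩
  dsimp only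
  rw [abs_of_pos (radialWeight_pos hb _), radialWeight_of_mul, div_le_iff₀ (hb _), add_comm]
  exact hmul 1 _

theorem norm_rowSum_weightedShift_radialWeight {E : Type*} [NormedAddCommGroup E]
    [InnerProductSpace ℂ E] [CompleteSpace E] [Nontrivial E] (hn : 1 ≤ n) (hb : ∀ k, 0 < b k)
    (hb_zero : b 0 = 1) (hmul : ∀ m k, b (m + k) ≤ b m * b k)
    (hμ : BddWeights fun β : Word n => |radialWeight b β|) (k : ℕ) :
    ‖rowSum (weightedShift E (radialWeight b) hμ) k‖ = b k ^ 2 := by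
  refine le_antisymm (norm_rowSum_weightedShift_le hμ (by positivity) fun f γ => ?_) ?_
  · rw [muProd_radialWeight fun k => (hb k).ne', length_wordOfFn]
    gcongr
    · exact (div_pos (hb _) (hb _)).le
    · exact (div_le_iff₀ (hb _)).2 (hmul _ _)
  · have lower := sq_muProd_le_norm_rowSum_weightedShift (E := E) hμ (k := k) (fun _ => ⟨0, hn⟩) 1
    rwa [muProd_radialWeight fun k => (hb k).ne', length_wordOfFn, FreeMonoid.length_one, add_zero,
      hb_zero, div_one] at lower

end RadialWeights

section Embedding

variable {n : ℕ} {E : Type*} [NormedAddCommGroup E] [InnerProductSpace ℂ E] [CompleteSpace E]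
  (T : Fin n → E →L[ℂ] E) {d : ℕ → ℝ} {K : ℝ}

theorem sum_norm_sq_smul_adjoint_wordOp_le
    (hS : HasSum (fun k => d k ^ 2 * ‖rowSum T k‖) (K ^ 2)) (x : E) (s : Finset (Word n)) :
    ∑ α ∈ s, ‖((d (FreeMonoid.length α) : ℂ) • adjoint (wordOp T α)) x‖ ^ 2
      ≤ (K * ‖x‖) ^ 2 := by
  let lengths := s.image FreeMonoid.length
  calc ∑ α ∈ s, ‖((d (FreeMonoid.length α) : ℂ) • adjoint (wordOp T α)) x‖ ^ 2
      = ∑ k ∈ lengths, ∑ α ∈ s with FreeMonoid.length α = k,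
          d k ^ 2 * ‖adjoint (wordOp T α) x‖ ^ 2 := by
        rw [← Finset.sum_fiberwise_of_maps_to fun α => Finset.mem_image_of_mem FreeMonoid.length]
        refine Finset.sum_congr rfl fun k _ => Finset.sum_congr rfl fun α hα => ?_
        rw [(Finset.mem_filter.1 hα).2, smul_apply, norm_smul, mul_pow, Complex.norm_real,
          Real.norm_eq_abs, sq_abs]
    _ ≤ ∑ k ∈ lengths, d k ^ 2 * (‖rowSum T k‖ * ‖x‖ ^ 2) := by
        simp only [← Finset.mul_sum]
        gcongr with k
        exact (sum_length_eq_le_sum_wordOfFn (fun _ => by positivity) s k).trans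
          (sum_norm_sq_adjoint_wordOp_le T k x)
    _ = (∑ k ∈ lengths, d k ^ 2 * ‖rowSum T k‖) * ‖x‖ ^ 2 := by
        simp only [Finset.sum_mul, mul_assoc]
    _ ≤ (K * ‖x‖) ^ 2 := by
        rw [mul_pow]
        gcongr
        exact sum_le_hasSum _ (fun k _ => by positivity) hS

/-- The map `x ↦ (d |α| • T_α* x)_α` into `ℓ²(Word n; E)`, which for suitable `d` embeds `E` as a
co-invariant subspace of a weighted multi-shift. -/
def adjointOrbitCLM (hK : 0 ≤ K) (hS : HasSum (fun k => d k ^ 2 * ‖rowSum T k‖) (K ^ 2)) :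
    E →L[ℂ] lp (fun _ : Word n => E) 2 :=
  analysisCLM (fun α => (d (FreeMonoid.length α) : ℂ) • adjoint (wordOp T α)) hK
    (sum_norm_sq_smul_adjoint_wordOp_le T hS)

variable {T} (hK : 0 ≤ K) (hS : HasSum (fun k => d k ^ 2 * ‖rowSum T k‖) (K ^ 2))

theorem adjointOrbitCLM_apply (x : E) (α : Word n) :
    adjointOrbitCLM T hK hS x α = (d (FreeMonoid.length α) : ℂ) • adjoint (wordOp T α) x := rfl

theorem norm_adjointOrbitCLM_le : ‖adjointOrbitCLM T hK hS‖ ≤ K :=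
  norm_analysisCLM_le _ hK _

theorem abs_mul_norm_le_norm_adjointOrbitCLM (x : E) :
    |d 0| * ‖x‖ ≤ ‖adjointOrbitCLM T hK hS x‖ := by
  simpa [adjointOrbitCLM_apply, wordOp_one, ← star_eq_adjoint, norm_smul] using
    lp.norm_apply_le_norm (p := 2) (by norm_num) (adjointOrbitCLM T hK hS x) 1

theorem intertwinesAdjoints_adjointOrbitCLM {μ : Word n → ℝ} (hμ : BddWeights fun β => |μ β|)
    (hd : ∀ i γ, μ (FreeMonoid.of i * γ) * d (FreeMonoid.length γ + 1) = d (FreeMonoid.length γ)) :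
    IntertwinesAdjoints (adjointOrbitCLM T hK hS) T (weightedShift E μ hμ) := by
  intro i
  ext x γ
  rw [comp_apply, comp_apply, adjoint_weightedShift_apply, adjointOrbitCLM_apply,
    adjointOrbitCLM_apply, adjoint_wordOp_mul_apply, wordOp_of, smul_smul, ← Complex.ofReal_mul,
    FreeMonoid.length_mul, FreeMonoid.length_of, add_comm 1, hd]

end Embedding

section Model

variable {n : ℕ} {E : Type*} [NormedAddCommGroup E] [InnerProductSpace ℂ E] [CompleteSpace E]
  {T : Fin n → E →L[ℂ] E}

/-- The growth sequence `b_k = (k + 1) ‖∑_{|α| = k} T_α T_α*‖^{1/2}` of the multi-shift modelling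
`T`. -/
def modelGrowth (T : Fin n → E →L[ℂ] E) (k : ℕ) : ℝ := ((k : ℝ) + 1) * √‖rowSum T k‖

theorem modelGrowth_sq (T : Fin n → E →L[ℂ] E) (k : ℕ) :
    modelGrowth T k ^ 2 = ((k : ℝ) + 1) ^ 2 * ‖rowSum T k‖ := by
  rw [modelGrowth, mul_pow, Real.sq_sqrt (norm_nonneg _)]

theorem modelGrowth_zero [Nontrivial E] (T : Fin n → E →L[ℂ] E) : modelGrowth T 0 = 1 := by
  simp [modelGrowth, norm_rowSum_zero]

theorem modelGrowth_add_le (T : Fin n → E →L[ℂ] E) (m k : ℕ) :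
    modelGrowth T (m + k) ≤ modelGrowth T m * modelGrowth T k := by
  have natCast_add_one_le : ((m + k : ℕ) : ℝ) + 1 ≤ ((m : ℝ) + 1) * ((k : ℝ) + 1) := by
    push_cast
    nlinarith [mul_nonneg (Nat.cast_nonneg (α := ℝ) m) (Nat.cast_nonneg (α := ℝ) k)]
  have sqrt_le : √‖rowSum T (m + k)‖ ≤ √‖rowSum T m‖ * √‖rowSum T k‖ := by
    rw [← Real.sqrt_mul (norm_nonneg _)]
    exact Real.sqrt_le_sqrt (norm_rowSum_add_le T m k)
  calc modelGrowth T (m + k)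
      ≤ (((m : ℝ) + 1) * ((k : ℝ) + 1)) * (√‖rowSum T m‖ * √‖rowSum T k‖) := by
        unfold modelGrowth
        gcongr
    _ = modelGrowth T m * modelGrowth T k := mul_mul_mul_comm _ _ _ _

theorem modelGrowth_pos [Nontrivial E] (hT : ∀ k, 1 ≤ k → rowSum T k ≠ 0) (k : ℕ) :
    0 < modelGrowth T k := by
  rcases k.eq_zero_or_pos with rfl | hk
  · rw [modelGrowth_zero]
    exact one_pos
  · have : 0 < ‖rowSum T k‖ := norm_pos_iff.2 (hT k hk)
    unfold modelGrowth
    positivity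

theorem hasSum_inv_modelGrowth_sq_mul_norm_rowSum (hT : ∀ k, 0 < modelGrowth T k) :
    HasSum (fun k => (modelGrowth T k)⁻¹ ^ 2 * ‖rowSum T k‖) ((Real.pi / √6) ^ 2) := by
  have zeta_two : HasSum (fun k : ℕ => 1 / (((k : ℕ) : ℝ) + 1) ^ 2) (Real.pi ^ 2 / 6) := by
    simpa using (hasSum_nat_add_iff' 1).2 hasSum_zeta_two
  rw [div_pow, Real.sq_sqrt (by norm_num)]
  refine zeta_two.congr_fun fun k => ?_
  have norm_ne_zero : ‖rowSum T k‖ ≠ 0 := fun h => (hT k).ne' (by simp [modelGrowth, h])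
  rw [inv_pow, modelGrowth_sq]
  field_simp

end Model

theorem stmt_13 (n : ℕ) (hn : 1 ≤ n)
    {H : Type*} [NormedAddCommGroup H] [InnerProductSpace ℂ H] [CompleteSpace H]
    (T : Fin n → H →L[ℂ] H)
    (hT : ∀ k : ℕ, 1 ≤ k → rowSum T k ≠ 0) :
    ∃ μ : Word n → ℝ,
      (∀ β : Word n, 1 ≤ FreeMonoid.length β → 0 < μ β) ∧ BddWeights μ ∧
      ∃ W : Fin n → Fock n →L[ℂ] Fock n, IsWeightedShift μ W ∧
        (∀ k : ℕ, 1 ≤ k →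
          Real.sqrt ‖rowSum W k‖ ≤ ((k : ℝ) + 1) * Real.sqrt ‖rowSum T k‖) ∧
        jsr W = jsr T ∧
        (∃ Wt : Fin n → lp (fun _ : Word n => H) 2 →L[ℂ] lp (fun _ : Word n => H) 2,
          IsWeightedShiftTensor μ Wt ∧
          ∃ (X : H →L[ℂ] lp (fun _ : Word n => H) 2) (c : ℝ), 0 < c ∧
            (∀ h : H, c * ‖h‖ ≤ ‖X h‖) ∧
            (∀ i : Fin n, ∀ y ∈ Set.range X, adjoint (Wt i) y ∈ Set.range X) ∧
            (∀ i : Fin n, X.comp (adjoint (T i)) = (adjoint (Wt i)).comp X) ∧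
            ‖X‖ * c⁻¹ ≤ Real.pi / Real.sqrt 6) ∧
        ∀ co : Word n →₀ ℂ,
          ‖polyOp T co‖ ≤ (Real.pi / Real.sqrt 6) * ‖polyOp W co‖ ∧
          spectralRadius ℂ (polyOp T co) ≤ spectralRadius ℂ (polyOp W co) := by
  have : Nontrivial H :=
    (subsingleton_or_nontrivial H).resolve_left fun _ => hT 1 le_rfl (Subsingleton.elim _ _)
  have hpos := modelGrowth_pos hT
  have hμ := bddWeights_abs_radialWeight (n := n) hpos (modelGrowth_add_le T)
  have hrow := norm_rowSum_weightedShift_radialWeight (E := ℂ) hn hpos (modelGrowth_zero T)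
    (modelGrowth_add_le T) hμ
  have hS := hasSum_inv_modelGrowth_sq_mul_norm_rowSum hpos
  let X := adjointOrbitCLM T (by positivity) hS
  have hX : IntertwinesAdjoints X T (weightedShift H (radialWeight (modelGrowth T)) hμ) :=
    intertwinesAdjoints_adjointOrbitCLM _ _ hμ (radialWeight_of_mul_mul_inv fun k => (hpos k).ne')
  have hX_le : ‖X‖ * 1⁻¹ ≤ Real.pi / √6 := by simpa using norm_adjointOrbitCLM_le _ hS
  have hX_ge (x : H) : 1 * ‖x‖ ≤ ‖X x‖ := by
    simpa [modelGrowth_zero] using abs_mul_norm_le_norm_adjointOrbitCLM _ hS x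
  let W := weightedShift ℂ (radialWeight (modelGrowth T)) hμ
  have hpoly (co : Word n →₀ ℂ) : ‖polyOp T co‖ ≤ Real.pi / √6 * ‖polyOp W co‖ :=
    (hX.norm_polyOp_le one_pos hX_ge co).trans
      (mul_le_mul hX_le (norm_polyOp_weightedShift_le hμ co) (norm_nonneg _) (by positivity))
  refine ⟨radialWeight (modelGrowth T), fun β _ => radialWeight_pos hpos β,
    fun i => (hμ i).range_mono _ fun _ => le_abs_self _,
    W, isWeightedShift_weightedShift hμ,
    fun k _ => by rw [hrow, Real.sqrt_sq (hpos k).le, modelGrowth],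
    jsr_eq_of_norm_rowSum_eq_mul (fun k => by positivity) tendsto_natCast_add_one_sq_rpow_one_div
      fun k => (hrow k).trans (modelGrowth_sq T k),
    ⟨weightedShift H _ hμ, isWeightedShiftTensor_weightedShift hμ, X, 1, one_pos, hX_ge,
      hX.adjoint_mem_range, hX, hX_le⟩,
    fun co => ⟨hpoly co, spectralRadius_polyOp_le (by positivity) hpoly co⟩⟩

end
end

section
/- Let n ≥ 1, let H be a separable infinite-dimensional Hilbert space, and let T = (T₁,…,Tₙ) be a nonzero quasi-nilpotent n-tuple of bounded operators on H (r(T) = 0 and some T_i ≠ 0). Then there exist a Hilbert space L, a nonzero n-tuple K = (K₁,…,Kₙ) of compact operators on L, and a quasi-affinity Ω : L → H (a bounded, injective operator with dense range) such that Ω K_i = T_i Ω for every i ∈ {1,…,n}; that is, K is a quasi-affine transform of T. -/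
open Filter ContinuousLinearMap
open scoped ComplexConjugate

noncomputable section

attribute [local instance] Classical.decEq

/-!
Choose scalars `a_k(m) > 0` decaying so fast in `m` that `T_i` acts on the vectors
`T_w x_k / a_k(|w|)`, with `(x_k)` dense, as a weighted shift whose weights `a_k(m + 1) / a_k(m)`
vanish at infinity, and yet so slowly that these vectors, suitably rescaled in `k`, have summable
norms; quasi-nilpotence leaves exactly enough room for both. Sending an orthonormal basis of `ℓ²`
to these vectors defines a bounded operator `Φ` with dense range that intertwines compact weighted
shifts with `T`. Compressing the shifts to the orthogonal complement of `ker Φ` makes `Φ` injective.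
-/

universe u v

section DiagonalOperators

theorem isCompactOperator_of_hasSum {𝕜 J V W : Type*} [NontriviallyNormedField 𝕜]
    [NormedAddCommGroup V] [NormedSpace 𝕜 V] [NormedAddCommGroup W] [NormedSpace 𝕜 W]
    [CompleteSpace W] {f : J → V →L[𝕜] W} {A : V →L[𝕜] W} (hf : ∀ j, IsCompactOperator (f j))
    (hA : HasSum f A) : IsCompactOperator A :=
  isCompactOperator_of_tendsto hA <| .of_forall fun s =>
    show ∑ j ∈ s, f j ∈ compactOperator (RingHom.id 𝕜) V W from sum_mem fun j _ => hf j

variable {𝕜 J E F : Type*} [RCLike 𝕜]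
  [NormedAddCommGroup E] [InnerProductSpace 𝕜 E]

theorem apply_eq_of_hasSum_rankOne [NormedAddCommGroup F] [NormedSpace 𝕜 F]
    {b : J → E} (hb : Orthonormal 𝕜 b) {y : J → F} {A : E →L[𝕜] F}
    (hA : HasSum (fun j => InnerProductSpace.rankOne 𝕜 (y j) (b j)) A) (j : J) :
    A (b j) = y j := by
  have hAj : HasSum (fun k => inner 𝕜 (b k) (b j) • y k) (A (b j)) :=
    hA.mapL (ContinuousLinearMap.apply 𝕜 F (b j))
  have hy : HasSum (fun k => inner 𝕜 (b k) (b j) • y k) (inner 𝕜 (b j) (b j) • y j) :=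
    hasSum_single j fun k hk => by rw [hb.inner_eq_zero hk, zero_smul]
  simpa [hb.norm_eq_one] using hAj.unique hy

theorem exists_apply_eq_of_summable_norm [NormedAddCommGroup F] [NormedSpace 𝕜 F]
    [CompleteSpace F] {b : J → E} (hb : Orthonormal 𝕜 b) {y : J → F}
    (hy : Summable fun j => ‖y j‖) : ∃ A : E →L[𝕜] F, ∀ j, A (b j) = y j := by
  have hsum : Summable fun j => InnerProductSpace.rankOne 𝕜 (y j) (b j) :=
    .of_norm <| by simpa [hb.norm_eq_one] using hy
  exact ⟨_, apply_eq_of_hasSum_rankOne hb hsum.hasSum⟩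

theorem isCompactOperator_rankOne_s17 [NormedAddCommGroup F] [NormedSpace 𝕜 F] (y : F) (b : E) :
    IsCompactOperator (InnerProductSpace.rankOne 𝕜 y b) :=
  (isCompactOperator_of_locallyCompactSpace_dom (innerSL 𝕜 b)).clm_comp (toSpanSingleton 𝕜 y)

variable [NormedAddCommGroup F] [InnerProductSpace 𝕜 F] {b : J → E} {u : J → F} {c : J → 𝕜}

theorem norm_sum_smul_rankOne_le (hb : Orthonormal 𝕜 b) (hu : Orthonormal 𝕜 u) {t : Finset J}
    {δ : ℝ} (hδ : 0 ≤ δ) (hc : ∀ j ∈ t, ‖c j‖ ≤ δ) :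
    ‖∑ j ∈ t, InnerProductSpace.rankOne 𝕜 (c j • u j) (b j)‖ ≤ δ := by
  refine opNorm_le_bound _ hδ fun x => le_of_sq_le_sq ?_ (by positivity)
  calc ‖(∑ j ∈ t, InnerProductSpace.rankOne 𝕜 (c j • u j) (b j)) x‖ ^ 2
      = ‖∑ j ∈ t, (c j * inner 𝕜 (b j) x) • u j‖ ^ 2 := by simp [smul_smul]
    _ = ∑ j ∈ t, ‖c j * inner 𝕜 (b j) x‖ ^ 2 :=
        hu.orthogonalFamily.norm_sum (fun j => c j * inner 𝕜 (b j) x) t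
    _ ≤ ∑ j ∈ t, δ ^ 2 * ‖inner 𝕜 (b j) x‖ ^ 2 := by
        refine Finset.sum_le_sum fun j hj => ?_
        rw [norm_mul, mul_pow]
        gcongr
        exact hc j hj
    _ = δ ^ 2 * ∑ j ∈ t, ‖inner 𝕜 (b j) x‖ ^ 2 := (Finset.mul_sum ..).symm
    _ ≤ δ ^ 2 * ‖x‖ ^ 2 := by
        gcongr
        exact hb.sum_inner_products_le x
    _ = (δ * ‖x‖) ^ 2 := (mul_pow ..).symm

theorem summable_smul_rankOne [CompleteSpace F] (hb : Orthonormal 𝕜 b) (hu : Orthonormal 𝕜 u)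
    (hc : Tendsto c cofinite (nhds 0)) :
    Summable fun j => InnerProductSpace.rankOne 𝕜 (c j • u j) (b j) := by
  refine summable_iff_vanishing_norm.2 fun ε hε => ?_
  have hfin : {j | ¬ ‖c j‖ < ε / 2}.Finite := by
    simpa using hc.norm.eventually_lt_const (norm_zero.trans_lt (half_pos hε))
  refine ⟨hfin.toFinset, fun t ht => (norm_sum_smul_rankOne_le hb hu (half_pos hε).le
    fun j hj => ?_).trans_lt (half_lt_self hε)⟩
  by_contra hj_large
  exact Finset.disjoint_left.1 ht hj (hfin.mem_toFinset.2 fun h => hj_large h.le)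

theorem exists_isCompactOperator_apply_eq_smul [CompleteSpace F] (hb : Orthonormal 𝕜 b)
    (hu : Orthonormal 𝕜 u) (hc : Tendsto c cofinite (nhds 0)) :
    ∃ S : E →L[𝕜] F, IsCompactOperator S ∧ ∀ j, S (b j) = c j • u j := by
  have hS := (summable_smul_rankOne hb hu hc).hasSum
  exact ⟨_, isCompactOperator_of_hasSum (fun j => isCompactOperator_rankOne_s17 _ _) hS,
    apply_eq_of_hasSum_rankOne hb hS⟩

end DiagonalOperators

section QuasiaffineTransform

variable {κ : Type*} {𝕜 : Type u} [RCLike 𝕜] {X : Type*} [NormedAddCommGroup X] [NormedSpace 𝕜 X]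

/-- The tuple `K` consists of compact operators and is a quasi-affine transform of the tuple `T`
through `Ω`: the operator `Ω` is a quasi-affinity (injective with dense range) and
`Ω K_i = T_i Ω` for every `i`. -/
structure IsCompactQuasiaffineTransform {L : Type*} [NormedAddCommGroup L] [NormedSpace 𝕜 L]
    (K : κ → L →L[𝕜] L) (T : κ → X →L[𝕜] X) (Ω : L →L[𝕜] X) : Prop where
  isCompactOperator (i : κ) : IsCompactOperator (K i)
  injective : Function.Injective Ω
  denseRange : DenseRange Ω
  comp_eq (i : κ) : Ω ∘L K i = T i ∘L Ω

theorem IsCompactQuasiaffineTransform.eq_zero_iff {L : Type*} [NormedAddCommGroup L]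
    [NormedSpace 𝕜 L] {K : κ → L →L[𝕜] L} {T : κ → X →L[𝕜] X} {Ω : L →L[𝕜] X}
    (h : IsCompactQuasiaffineTransform K T Ω) (i : κ) : K i = 0 ↔ T i = 0 := by
  have happly (z : L) : Ω (K i z) = T i (Ω z) := DFunLike.congr_fun (h.comp_eq i) z
  constructor
  · intro hK
    refine coeFn_injective (h.denseRange.equalizer (T i).continuous continuous_zero ?_)
    funext z
    simpa [hK] using (happly z).symm
  · intro hT
    ext z
    exact h.injective (by simp [happly, hT])

variable {E : Type*} [NormedAddCommGroup E] [InnerProductSpace 𝕜 E] [CompleteSpace E]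

theorem IsCompactQuasiaffineTransform.of_comp_eq {S : κ → E →L[𝕜] E} {T : κ → X →L[𝕜] X}
    {Φ : E →L[𝕜] X} (hS : ∀ i, IsCompactOperator (S i)) (hΦ : DenseRange Φ)
    (hcomp : ∀ i, Φ ∘L S i = T i ∘L Φ) :
    IsCompactQuasiaffineTransform
      (fun i => Φ.kerᗮ.orthogonalProjectionOnto ∘L S i ∘L Φ.kerᗮ.subtypeL) T
      (Φ ∘L Φ.kerᗮ.subtypeL) := by
  have : CompleteSpace Φ.ker := Φ.isClosed_ker.completeSpace_coe
  have hproj (z : E) : Φ (Φ.kerᗮ.orthogonalProjectionOnto z) = Φ z := by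
    have hz := Φ.kerᗮ.sub_starProjection_mem_orthogonal z
    rw [Submodule.orthogonal_orthogonal] at hz
    exact (sub_eq_zero.1 ((map_sub Φ _ _).symm.trans hz)).symm
  refine ⟨fun i => ((hS i).comp_clm Φ.kerᗮ.subtypeL).clm_comp
    Φ.kerᗮ.orthogonalProjectionOnto, ?_, ?_, fun i => ?_⟩
  · refine (injective_iff_map_eq_zero _).2 fun z hz => Subtype.ext ?_
    exact inner_self_eq_zero.1 (Submodule.inner_right_of_mem_orthogonal (K := Φ.ker) hz z.2)
  · refine hΦ.mono ?_
    rintro _ ⟨z, rfl⟩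
    exact ⟨Φ.kerᗮ.orthogonalProjectionOnto z, hproj z⟩
  · ext z
    exact (hproj _).trans (DFunLike.congr_fun (hcomp i) (z : E))

theorem exists_isCompactQuasiaffineTransform_of_apply_eq_smul [CompleteSpace X] {J : Type v}
    {T : κ → X →L[𝕜] X} {y : J → X} (hy : Summable fun j => ‖y j‖)
    (hspan : Dense (Submodule.span 𝕜 (Set.range y) : Set X))
    {σ : κ → J → J} (hσ : ∀ i, Function.Injective (σ i))
    {c : κ → J → 𝕜} (hc : ∀ i, Tendsto (c i) cofinite (nhds 0))
    (hT : ∀ i j, T i (y j) = c i j • y (σ i j)) :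
    ∃ (L : Type (max u v)) (_ : NormedAddCommGroup L) (_ : InnerProductSpace 𝕜 L)
      (_ : CompleteSpace L) (K : κ → L →L[𝕜] L) (Ω : L →L[𝕜] X),
      IsCompactQuasiaffineTransform K T Ω := by
  let b : HilbertBasis J 𝕜 (lp (fun _ : J => 𝕜) 2) := default
  obtain ⟨Φ, hΦ⟩ := exists_apply_eq_of_summable_norm b.orthonormal hy
  choose S hS_compact hS using fun i =>
    exists_isCompactOperator_apply_eq_smul b.orthonormal (b.orthonormal.comp _ (hσ i)) (hc i)
  have hΦ_dense : DenseRange Φ := by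
    refine hspan.mono (Submodule.span_le.2 ?_ : Submodule.span 𝕜 _ ≤ Φ.range)
    rintro _ ⟨j, rfl⟩
    exact ⟨b j, hΦ j⟩
  have hcomp (i : κ) : Φ ∘L S i = T i ∘L Φ := by
    refine ext_on (Submodule.dense_iff_topologicalClosure_eq_top.2 b.dense_span) ?_
    rintro _ ⟨j, rfl⟩
    simp [hS, hΦ, hT]
  exact ⟨_, inferInstance, inferInstance, inferInstance, _, _,
    .of_comp_eq hS_compact hΦ_dense hcomp⟩

end QuasiaffineTransform

section Sequences

theorem exists_antitone_ge_tendsto {a : ℕ → ℝ} {l : ℝ} (ha : Tendsto a atTop (nhds l)) :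
    ∃ γ : ℕ → ℝ, Antitone γ ∧ (∀ m, a m ≤ γ m) ∧ Tendsto γ atTop (nhds l) := by
  have hbdd (m : ℕ) : BddAbove (Set.range fun j => a (m + j)) :=
    ha.bddAbove_range.mono (Set.range_comp_subset_range _ a)
  have hle (m : ℕ) : a m ≤ ⨆ j, a (m + j) := le_ciSup (hbdd m) 0
  refine ⟨fun m => ⨆ j, a (m + j), fun m m' hm => ciSup_le fun j => ?_, hle,
    tendsto_order.2 ⟨fun r hr => ?_, fun r hr => ?_⟩⟩
  · obtain ⟨d, rfl⟩ := Nat.exists_eq_add_of_le hm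
    simpa [add_assoc] using le_ciSup (hbdd m) (d + j)
  · exact (ha.eventually_const_lt hr).mono fun m hm => hm.trans_le (hle m)
  · obtain ⟨q, hlq, hqr⟩ := exists_between hr
    obtain ⟨M, hM⟩ := eventually_atTop.1 (ha.eventually_lt_const hlq)
    filter_upwards [eventually_ge_atTop M] with m hm
    exact (ciSup_le fun j => (hM _ (hm.trans (Nat.le_add_right m j))).le).trans_lt hqr

theorem summable_pow_self_of_tendsto_zero {a : ℕ → ℝ} (ha : Tendsto a atTop (nhds 0)) :
    Summable fun m => a m ^ m := by
  refine .of_norm_bounded_eventually_nat summable_geometric_two ?_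
  filter_upwards [ha.norm.eventually_lt_const (show ‖(0 : ℝ)‖ < 1 / 2 by norm_num)] with m hm
  rw [norm_pow]
  gcongr

variable {s : ℕ → ℝ}

theorem exists_antitone_eventually_le_pow (hs₀ : ∀ m, 0 ≤ s m)
    (hs : ∀ ε > 0, ∀ᶠ m in atTop, s m ≤ ε ^ m) :
    ∃ γ : ℕ → ℝ, Antitone γ ∧ (∀ m, 0 < γ m) ∧ Tendsto γ atTop (nhds 0) ∧
      ∀ᶠ m in atTop, s m ≤ γ m ^ m := by
  have hroot {m : ℕ} (hm : 0 < m) {ε : ℝ} (hε : 0 < ε) :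
      s m ^ (m : ℝ)⁻¹ ≤ ε ↔ s m ≤ ε ^ m := by
    rw [Real.rpow_inv_le_iff_of_pos (hs₀ m) hε.le (by positivity), Real.rpow_natCast]
  have hroot_lim : Tendsto (fun m => s m ^ (m : ℝ)⁻¹) atTop (nhds 0) := by
    refine tendsto_order.2 ⟨fun r hr => .of_forall fun m =>
      hr.trans_le (Real.rpow_nonneg (hs₀ m) _), fun r hr => ?_⟩
    filter_upwards [hs _ (half_pos hr), eventually_gt_atTop 0] with m hm hm₀
    exact ((hroot hm₀ (half_pos hr)).2 hm).trans_lt (half_lt_self hr)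
  obtain ⟨γ, hγ_anti, hγ_ge, hγ_lim⟩ := exists_antitone_ge_tendsto
    (hroot_lim.add (tendsto_one_div_add_atTop_nhds_zero_nat (𝕜 := ℝ)))
  have hlt (m : ℕ) : s m ^ (m : ℝ)⁻¹ < γ m :=
    (lt_add_of_pos_right _ Nat.one_div_pos_of_nat).trans_le (hγ_ge m)
  have hγ_pos (m : ℕ) : 0 < γ m := (Real.rpow_nonneg (hs₀ m) _).trans_lt (hlt m)
  refine ⟨γ, hγ_anti, hγ_pos, by simpa using hγ_lim, ?_⟩
  filter_upwards [eventually_gt_atTop 0] with m hm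
  exact (hroot hm (hγ_pos m)).1 (hlt m).le

theorem exists_tendsto_zero_summable_div_prod (hs₀ : ∀ m, 0 ≤ s m)
    (hs : ∀ ε > 0, ∀ᶠ m in atTop, s m ≤ ε ^ m) {ρ : ℝ} (hρ : 0 < ρ) :
    ∃ c : ℕ → ℝ, (∀ m, 0 < c m) ∧ (∀ m, c m ≤ ρ) ∧ Tendsto c atTop (nhds 0) ∧
      Summable fun m => s m / ∏ j ∈ Finset.range m, c j := by
  obtain ⟨γ, hγ_anti, hγ_pos, hγ_lim, hγ⟩ := exists_antitone_eventually_le_pow hs₀ hs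
  -- The square root makes the numerator `γ m ^ m` outweigh the denominator `∏ j < m, c j`.
  let c (m : ℕ) : ℝ := ρ / √(γ 0) * √(γ m)
  have hsqrt_pos (m : ℕ) : 0 < √(γ m) := Real.sqrt_pos.2 (hγ_pos m)
  have hc_pos (m : ℕ) : 0 < c m := mul_pos (div_pos hρ (hsqrt_pos 0)) (hsqrt_pos m)
  have hc_anti : Antitone c := fun m m' hm => by
    have := hsqrt_pos 0
    have := hγ_anti hm
    dsimp only [c]
    gcongr
  have hsqrt_lim : Tendsto (fun m => √(γ m)) atTop (nhds 0) := by simpa using hγ_lim.sqrt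
  refine ⟨c, hc_pos, fun m => (hc_anti m.zero_le).trans_eq (div_mul_cancel₀ ρ (hsqrt_pos 0).ne'),
    by simpa [c] using hsqrt_lim.const_mul (ρ / √(γ 0)), ?_⟩
  have hprod (m : ℕ) : c m ^ m ≤ ∏ j ∈ Finset.range m, c j := by
    simpa using Finset.prod_le_prod (fun _ _ => (hc_pos m).le)
      fun j hj => hc_anti (Finset.mem_range.1 hj).le
  refine .of_norm_bounded_eventually_nat (g := fun m => (√(γ 0) / ρ * √(γ m)) ^ m)
    (summable_pow_self_of_tendsto_zero (by simpa using hsqrt_lim.const_mul (√(γ 0) / ρ))) ?_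
  filter_upwards [hγ] with m hm
  have hcm := pow_pos (hc_pos m) m
  calc ‖s m / ∏ j ∈ Finset.range m, c j‖
      = s m / ∏ j ∈ Finset.range m, c j :=
        Real.norm_of_nonneg (div_nonneg (hs₀ m) (hcm.le.trans (hprod m)))
    _ ≤ γ m ^ m / c m ^ m := div_le_div₀ (pow_nonneg (hγ_pos m).le m) hm hcm (hprod m)
    _ = (√(γ 0) / ρ * √(γ m)) ^ m := by
        have hm_ne := (hsqrt_pos m).ne'
        have h0_ne := (hsqrt_pos 0).ne'
        rw [← div_pow]
        congr 1
        dsimp only [c]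
        nth_rw 1 [← Real.mul_self_sqrt (hγ_pos m).le]
        field_simp

theorem exists_pos_summable_mul {β : Type*} {p : ℕ → β → ℝ} (hp₀ : ∀ k w, 0 ≤ p k w)
    (hp : ∀ k, Summable (p k)) :
    ∃ r : ℕ → ℝ, (∀ k, 0 < r k) ∧ Summable fun q : ℕ × β => r q.1 * p q.1 q.2 := by
  have htsum (k : ℕ) : 0 ≤ ∑' w, p k w := tsum_nonneg (hp₀ k)
  have hpos (k : ℕ) : 0 < 1 + ∑' w, p k w := add_pos_of_pos_of_nonneg one_pos (htsum k)
  let r (k : ℕ) : ℝ := (1 / 2) ^ k / (1 + ∑' w, p k w)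
  have hr (k : ℕ) : 0 < r k := div_pos (by positivity) (hpos k)
  have hrp (k : ℕ) (w : β) : 0 ≤ r k * p k w := mul_nonneg (hr k).le (hp₀ k w)
  have hle (k : ℕ) : ∑' w, r k * p k w ≤ (1 / 2) ^ k :=
    calc ∑' w, r k * p k w = (1 / 2) ^ k * ((∑' w, p k w) / (1 + ∑' w, p k w)) := by
          rw [tsum_mul_left, div_mul_eq_mul_div, mul_div_assoc]
      _ ≤ (1 / 2) ^ k := mul_le_of_le_one_right (by positivity)
          ((div_le_one (hpos k)).2 (le_add_of_nonneg_left zero_le_one))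
  have hrow (k : ℕ) : Summable fun w => r k * p k w := (hp k).mul_left (r k)
  have hcol : Summable fun k => ∑' w, r k * p k w :=
    .of_nonneg_of_le (fun k => tsum_nonneg (hrp k)) hle summable_geometric_two
  have hrp' : (0 : ℕ × β → ℝ) ≤ fun q => r q.1 * p q.1 q.2 := fun q => hrp q.1 q.2
  exact ⟨r, hr, (summable_prod_of_nonneg hrp').2 ⟨hrow, hcol⟩⟩

theorem tendsto_cofinite_prod_of_norm_le {α β V : Type*} [SeminormedAddCommGroup V]
    {f : α → β → V} {g : α → ℝ} (hg : Tendsto g cofinite (nhds 0)) (hfg : ∀ a b, ‖f a b‖ ≤ g a)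
    (hf : ∀ a, Tendsto (f a) cofinite (nhds 0)) :
    Tendsto (fun q : α × β => f q.1 q.2) cofinite (nhds 0) := by
  refine Metric.tendsto_nhds.2 fun ε hε => ?_
  have hfst : {a | ¬ g a < ε}.Finite := hg.eventually_lt_const hε
  have hsnd (a : α) : {b | ¬ dist (f a b) 0 < ε}.Finite := Metric.tendsto_nhds.1 (hf a) ε hε
  refine (hfst.biUnion fun a _ => (hsnd a).image (Prod.mk a)).subset ?_
  rintro ⟨a, b⟩ hab
  refine Set.mem_biUnion (fun hga => hab ?_) ⟨b, hab, rfl⟩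
  exact (dist_zero_right (f a b)).trans_lt ((hfg a b).trans_lt hga)

end Sequences

section Words

variable {ι : Type v}

theorem tendsto_length_cofinite_atTop [Finite ι] :
    Tendsto (List.length : List ι → ℕ) cofinite atTop :=
  Nat.cofinite_eq_atTop ▸ .cofinite_of_finite_preimage_singleton (List.finite_length_eq ι)

theorem summable_list_iff_of_nonneg [Fintype ι] {f : List ι → ℝ} (hf : ∀ w, 0 ≤ f w) :
    Summable f ↔ Summable fun m => ∑ g : Fin m → ι, f (List.ofFn g) := by
  refine List.equivSigmaTuple.symm.summable_iff.symm.trans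
    ((summable_sigma_of_nonneg fun _ => hf _).trans ?_)
  simp [Summable.of_finite, tsum_fintype, List.equivSigmaTuple]

/-- A tuple `T` in a normed ring is jointly quasi-nilpotent if `sup_{|w| = k} ‖T_w‖ ^ (1 / k) → 0`,
that is, if its Rota–Strang joint spectral radius vanishes. The `k`-th roots are avoided by
comparing with `ε ^ k`. -/
def IsJointlyQuasinilpotent {A : Type*} [NormedRing A] (T : ι → A) : Prop :=
  ∀ ε > 0, ∀ᶠ k in atTop, ∀ w : List ι, w.length = k → ‖(w.map T).prod‖ ≤ ε ^ k

namespace IsJointlyQuasinilpotent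

theorem eventually_sum_norm_le_pow {A : Type*} [NormedRing A] [Fintype ι] {T : ι → A}
    (hT : IsJointlyQuasinilpotent T) {ε : ℝ} (hε : 0 < ε) :
    ∀ᶠ m in atTop, ∑ g : Fin m → ι, ‖((List.ofFn g).map T).prod‖ ≤ ε ^ m := by
  have hcard : (0 : ℝ) < Fintype.card ι + 1 := by positivity
  filter_upwards [hT (ε / (Fintype.card ι + 1)) (by positivity)] with m hm
  calc ∑ g : Fin m → ι, ‖((List.ofFn g).map T).prod‖
      ≤ ∑ _g : Fin m → ι, (ε / (Fintype.card ι + 1)) ^ m :=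
        Finset.sum_le_sum fun g _ => hm _ List.length_ofFn
    _ = (Fintype.card ι * (ε / (Fintype.card ι + 1))) ^ m := by simp [mul_pow]
    _ ≤ ε ^ m := by
        gcongr
        rw [mul_div_left_comm]
        exact mul_le_of_le_one_right hε.le
          ((div_le_one hcard).2 (le_add_of_nonneg_right zero_le_one))

variable {𝕜 : Type u} [RCLike 𝕜] {X : Type*} [NormedAddCommGroup X] [NormedSpace 𝕜 X] [Finite ι]
  {T : ι → X →L[𝕜] X}

theorem exists_summable_weighted_orbit (hT : IsJointlyQuasinilpotent T) (x : X) {ρ : ℝ}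
    (hρ : 0 < ρ) :
    ∃ (c : List ι → 𝕜) (y : List ι → X), (∀ w, ‖c w‖ ≤ ρ) ∧ Tendsto c cofinite (nhds 0) ∧
      y [] = x ∧ (Summable fun w => ‖y w‖) ∧ ∀ i w, T i (y w) = c w • y (i :: w) := by
  have := Fintype.ofFinite ι
  obtain ⟨c, hc_pos, hc_le, hc_lim, hsum⟩ := exists_tendsto_zero_summable_div_prod
    (fun m => Finset.sum_nonneg fun g _ => norm_nonneg ((List.ofFn g).map T).prod)
    (fun ε hε => hT.eventually_sum_norm_le_pow hε) hρ
  let a (m : ℕ) : ℝ := ∏ j ∈ Finset.range m, c j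
  have ha_pos (m : ℕ) : 0 < a m := Finset.prod_pos fun j _ => hc_pos j
  refine ⟨fun w => (c w.length : 𝕜), fun w => ((a w.length)⁻¹ : 𝕜) • (w.map T).prod x,
    fun w => ?_, ?_, by simp [a], ?_, fun i w => ?_⟩
  · simpa [abs_of_pos (hc_pos _)] using hc_le w.length
  · have hlim := (RCLike.continuous_ofReal (K := 𝕜)).tendsto 0 |>.comp
      (hc_lim.comp (tendsto_length_cofinite_atTop (ι := ι)))
    rwa [RCLike.ofReal_zero] at hlim
  · have hwords : Summable fun w : List ι => ‖(w.map T).prod‖ / a w.length := by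
      refine (summable_list_iff_of_nonneg fun w =>
        div_nonneg (norm_nonneg _) (ha_pos _).le).2 (hsum.congr fun m => ?_)
      simp only [List.length_ofFn, Finset.sum_div, a]
    refine .of_nonneg_of_le (fun w => norm_nonneg _) (fun w => ?_) (hwords.mul_right ‖x‖)
    rw [norm_smul, norm_inv, RCLike.norm_ofReal, abs_of_pos (ha_pos _), div_mul_eq_mul_div,
      inv_mul_eq_div]
    gcongr
    · exact (ha_pos _).le
    · exact le_opNorm _ _
  · have hc_ne : (c w.length : 𝕜) ≠ 0 := RCLike.ofReal_ne_zero.2 (hc_pos _).ne'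
    simp [a, Finset.prod_range_succ, smul_smul, mul_inv_rev, hc_ne]

end IsJointlyQuasinilpotent

end Words

theorem stmt_17_general {ι : Type v} [Finite ι] {𝕜 : Type u} [RCLike 𝕜] {X : Type*}
    [NormedAddCommGroup X] [NormedSpace 𝕜 X] [CompleteSpace X] [TopologicalSpace.SeparableSpace X]
    {T : ι → X →L[𝕜] X} (hT : IsJointlyQuasinilpotent T) :
    ∃ (L : Type (max u v)) (_ : NormedAddCommGroup L) (_ : InnerProductSpace 𝕜 L)
      (_ : CompleteSpace L) (K : ι → L →L[𝕜] L) (Ω : L →L[𝕜] X),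
      IsCompactQuasiaffineTransform K T Ω := by
  choose c y hc_le hc_lim hy_nil hy_sum hTy using fun k : ℕ =>
    hT.exists_summable_weighted_orbit (TopologicalSpace.denseSeq X k) (ρ := 1 / (k + 1))
      Nat.one_div_pos_of_nat
  obtain ⟨r, hr, hr_sum⟩ := exists_pos_summable_mul (fun k w => norm_nonneg (y k w)) hy_sum
  refine exists_isCompactQuasiaffineTransform_of_apply_eq_smul
    (y := fun q : ℕ × List ι => (r q.1 : 𝕜) • y q.1 q.2) (σ := fun i q => (q.1, i :: q.2))
    (c := fun _ q => c q.1 q.2) (hr_sum.congr fun q => ?_) ?_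
    (fun i => Function.injective_id.prodMap List.cons_injective)
    (fun _ => tendsto_cofinite_prod_of_norm_le ?_ hc_le hc_lim) (fun i q => ?_)
  · rw [norm_smul, RCLike.norm_ofReal, abs_of_pos (hr _)]
  · refine (TopologicalSpace.denseRange_denseSeq X).mono ?_
    rintro _ ⟨k, rfl⟩
    refine (Submodule.smul_mem_iff _ (RCLike.ofReal_ne_zero (K := 𝕜).2 (hr k).ne')).1
      (Submodule.subset_span ⟨(k, []), ?_⟩)
    simp only [hy_nil]
  · exact Nat.cofinite_eq_atTop ▸ tendsto_one_div_add_atTop_nhds_zero_nat (𝕜 := ℝ)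
  · rw [map_smul, hTy, smul_comm]

theorem norm_sq_le_norm_sum_mul_star {ι A : Type*} [Fintype ι] [CStarAlgebra A] [PartialOrder A]
    [StarOrderedRing A] (a : ι → A) (i : ι) : ‖a i‖ ^ 2 ≤ ‖∑ j, a j * star (a j)‖ := by
  rw [sq, ← CStarRing.norm_self_mul_star]
  exact CStarAlgebra.norm_le_norm_of_nonneg_of_le (mul_star_self_nonneg _)
    (Finset.single_le_sum (fun j _ => mul_star_self_nonneg (a j)) (Finset.mem_univ i))

theorem isJointlyQuasinilpotent_of_tendsto_norm_rowSum {n : ℕ} {H : Type*} [NormedAddCommGroup H]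
    [InnerProductSpace ℂ H] [CompleteSpace H] {T : Fin n → H →L[ℂ] H}
    (hT : Tendsto (fun k : ℕ => ‖rowSum T k‖ ^ ((1 : ℝ) / (2 * k))) atTop (nhds 0)) :
    IsJointlyQuasinilpotent T := by
  intro ε hε
  filter_upwards [hT.eventually_lt_const hε, eventually_gt_atTop 0] with k hk hk₀
  rintro w rfl
  have hrow : ‖rowSum T w.length‖ ≤ (ε ^ w.length) ^ 2 := by
    rw [one_div, Real.rpow_inv_lt_iff_of_pos (norm_nonneg _) hε.le (by positivity)] at hk
    rw [← pow_mul, mul_comm]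
    exact_mod_cast hk.le
  have hword : ‖(w.map T).prod‖ ^ 2 ≤ ‖rowSum T w.length‖ := by
    simpa [rowSum, star_eq_adjoint, wordOp, wordOfFn] using norm_sq_le_norm_sum_mul_star
      (fun f : Fin w.length → Fin n => wordOp T (wordOfFn f)) w.get
  exact le_of_sq_le_sq (hword.trans hrow) (by positivity)

theorem stmt_17 (n : ℕ) (hn : 1 ≤ n)
    {H : Type} [NormedAddCommGroup H] [InnerProductSpace ℂ H] [CompleteSpace H]
    [TopologicalSpace.SeparableSpace H] (hinf : ¬ FiniteDimensional ℂ H)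
    (T : Fin n → H →L[ℂ] H)
    (hq : Tendsto (fun k : ℕ => ‖rowSum T k‖ ^ ((1 : ℝ) / (2 * k))) atTop (nhds 0))
    (hnz : ∃ i, T i ≠ 0) :
    ∃ (L : Type) (_ : NormedAddCommGroup L) (_ : InnerProductSpace ℂ L)
      (_ : CompleteSpace L) (K : Fin n → L →L[ℂ] L) (Ω : L →L[ℂ] H),
      (∃ i, K i ≠ 0) ∧ (∀ i, IsCompactOperator ⇑(K i)) ∧
      Function.Injective Ω ∧ DenseRange Ω ∧
      ∀ i, Ω.comp (K i) = (T i).comp Ω := by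
  obtain ⟨L, _, _, _, K, Ω, h⟩ :=
    stmt_17_general (isJointlyQuasinilpotent_of_tendsto_norm_rowSum hq)
  exact ⟨L, _, _, ‹_›, K, Ω, hnz.imp fun i => (h.eq_zero_iff i).not.2, h.isCompactOperator,
    h.injective, h.denseRange, h.comp_eq⟩

end
end
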